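/- Let d ≥ 3 be a fixed integer and p a prime with gcd(p,d) = 1. Then, as n → ∞, the normalized count (1/(nd)!) · Σ_{v ∈ F_p^n \ {0}} #{ permutations 𝒫 of {1,…,n}×{1,…,d} : A(𝒫)·v ≡ 0 (mod p) } converges to 1; that is, the total number of pairs (v, 𝒢) with v a nonzero vector in F_p^n, 𝒢 a graph of the configuration model, and A(𝒢)v = 0 in F_p, equals (1 + o(1))·(nd)!. -/

import Mathlib

/-!
Let `ψ` be the standard additive character of `F_p` and `v ↦ lift d v` the word on the `n d`
half-edges that is constant on fibres. By Fourier inversion in the vertex variable,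
`#{P : A(P) v = 0} / (nd)! = p ^ (-n) * ∑ t, avg (lift d t) (lift d v)`, where `avg f g` is the
expectation of `ψ (⟨f, g ∘ P⟩)` over a uniform permutation `P` (`sum_avg_eq`). Summing over all `v`
therefore gives an expression that is symmetric in `t` and `v`, and it has to be shown that it
tends to `2`: the vector `v = 0` accounts for `1`.

* Constant `v` contribute exactly `1`, because `A(P) (c, …, c) = (d c, …, d c)` and `p ∤ d`
  (`sum_consts_avg`). By symmetry constant `t` contribute `1` as well, and the overlap is at most
  `p ^ 2 / p ^ n` (`norm_total_sub_le`). All remaining pairs are negligible.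
* Corner: `v` is not constant but agrees with a constant outside a small set of coordinates.
  Shifting by constants does not change `‖avg‖`, so `v` may be taken nonzero of small support.
  By Cauchy–Schwarz and Parseval, the square of `p ^ (-n) * ∑ t, ‖avg (lift d t) (lift d v)‖` is at
  most the probability that `A(P) v = A(Q) v` for independent `P, Q`. Such a collision forces the
  half-edges that are matched to the support of `v` to lie over few vertices
  (`card_collision_le`); for `d ≥ 3` the resulting bound beats the number of vectors of given
  support size, and the total is `O(n ^ (-1/2))` (`corner_sum`).
* Bulk: neither `t` nor `v` is close to a constant. Averaging over transpositions of disjoint pairs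
  of positions makes `avg (lift d t) (lift d v)` exponentially small (`norm_avg_far_le`), whereas
  the operator norm of the Fourier matrix gives `|orb f| * |orb g| * ‖avg f g‖ ^ 2 ≤ p ^ (n d)`
  (`avg_sq_le`). As `|orb (lift d v)| ≥ |orb v| ^ d` and `d ≥ 3`, the two interpolate to
  `‖avg (lift d t) (lift d v)‖ ≤ p ^ n * B / (|orb t| * |orb v|)` with `B` exponentially small
  (`bulk_single`). Finally `∑ v, 1 / |orb v|` counts orbits, hence is polynomial in `n`
  (`sum_inv_orb_le`).
-/

/-- `phi a j` is the number of coordinates of the tuple `a` equal to `j`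
(the `j`-th coordinate of the counting vector `Φ(a)`). -/
noncomputable def phi {p k : ℕ} (a : Fin k → ZMod p) (j : ZMod p) : ℕ :=
  Nat.card {i : Fin k // a i = j}

/-- The adjacency matrix of the `d`-regular directed multigraph on `n` vertices
associated to a permutation `P` of the `n·d` points of the configuration model:
`A(P)_{kℓ} = #{k' ∈ F_k : P(k') ∈ F_ℓ}`. -/
noncomputable def adjMat (n d : ℕ) (P : Equiv.Perm (Fin n × Fin d)) :
    Matrix (Fin n) (Fin n) ℤ :=
  Matrix.of fun k l => (Nat.card {k' : Fin d // (P (k, k')).1 = l} : ℤ)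

/-- `T_{d,p}`, the set of `d`-tuples over `F_p` summing to zero. -/
def Tset (d p : ℕ) [NeZero p] : Finset (Fin d → ZMod p) :=
  Finset.univ.filter (fun a => ∑ i, a i = 0)

/-! ### Orbits of words and letter counts -/

section Orbits

variable {I F : Type*} [Fintype I] [DecidableEq I] [Fintype F] [DecidableEq F]

/-- The rearrangements of a word `g : I → F`, i.e. its orbit under permutations of the positions. -/
def orb (g : I → F) : Finset (I → F) :=
  Finset.univ.filter fun w => ∃ P : Equiv.Perm I, w = g ∘ P

/-- The number of occurrences of the letter `j` in the word `g`. -/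
def cnt (g : I → F) (j : F) : ℕ := Fintype.card {x : I // g x = j}

lemma mem_orb {g w : I → F} : w ∈ orb g ↔ ∃ P : Equiv.Perm I, w = g ∘ P := by
  simp [orb]

lemma self_mem_orb (g : I → F) : g ∈ orb g := mem_orb.2 ⟨1, rfl⟩

lemma orb_card_pos (g : I → F) : 0 < (orb g).card :=
  Finset.card_pos.2 ⟨g, self_mem_orb g⟩

lemma mem_orb_iff_cnt {g w : I → F} : w ∈ orb g ↔ cnt w = cnt g := by
  rw [mem_orb]
  constructor
  · rintro ⟨P, rfl⟩
    funext j
    exact Fintype.card_congr (P.subtypeEquiv fun a => Iff.rfl)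
  · intro h
    have e : ∀ j, {x : I // w x = j} ≃ {x : I // g x = j} := fun j =>
      Fintype.equivOfCardEq (congrFun h j)
    exact ⟨Equiv.ofFiberEquiv e, by funext x; exact (Equiv.ofFiberEquiv_map e x).symm⟩

lemma orb_eq_of_mem {g w : I → F} (h : w ∈ orb g) : orb w = orb g := by
  ext u
  rw [mem_orb_iff_cnt, mem_orb_iff_cnt, mem_orb_iff_cnt.1 h]

/-- Each rearrangement of `g` arises from equally many permutations. -/
lemma card_eq_of_comp (g : I → F) {w : I → F} (hw : w ∈ orb g) :
    (Finset.univ.filter fun P : Equiv.Perm I => g ∘ P = w).card = ∏ j, (cnt g j).factorial := by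
  obtain ⟨P0, rfl⟩ := mem_orb.1 hw
  rw [show (∏ j, (cnt g j).factorial) = _ from (DomMulAct.stabilizer_card g).symm,
    Fintype.card_subtype]
  refine Finset.card_bij (fun P _ => P * P0⁻¹) ?_ ?_ ?_
  · intro P hP
    simp only [Finset.mem_filter, Finset.mem_univ, true_and] at hP ⊢
    funext x
    have := congrFun hP (P0⁻¹ x)
    simpa using this
  · intro P _ Q _ h
    simpa using h
  · intro Q hQ
    simp only [Finset.mem_filter, Finset.mem_univ, true_and] at hQ
    refine ⟨Q * P0, ?_, by simp⟩
    simp only [Finset.mem_filter, Finset.mem_univ, true_and]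
    funext x
    exact congrFun hQ (P0 x)

lemma orb_card_mul (g : I → F) :
    (orb g).card * ∏ j, (cnt g j).factorial = (Fintype.card I).factorial := by
  have h := Finset.card_eq_sum_card_fiberwise (f := fun P : Equiv.Perm I => g ∘ P)
    (s := Finset.univ) (t := orb g) (fun P _ => mem_orb.2 ⟨P, rfl⟩)
  rw [Finset.sum_congr rfl (fun w hw => card_eq_of_comp g hw), Finset.card_univ,
    Fintype.card_perm] at h
  simp [h]

/-- A uniformly random permutation of the positions produces a uniformly random rearrangement. -/
lemma sum_perm_eq (g : I → F) (h : (I → F) → ℂ) :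
    ((orb g).card : ℂ) * ∑ P : Equiv.Perm I, h (g ∘ P) =
      ((Fintype.card I).factorial : ℂ) * ∑ w ∈ orb g, h w := by
  have h1 : ∑ P : Equiv.Perm I, h (g ∘ P) =
      ∑ w ∈ orb g, ((∏ j, (cnt g j).factorial : ℕ) : ℂ) * h w := by
    rw [← Finset.sum_fiberwise_of_maps_to (s := Finset.univ) (t := orb g)
      (g := fun P : Equiv.Perm I => g ∘ P) (fun P _ => mem_orb.2 ⟨P, rfl⟩)]
    refine Finset.sum_congr rfl fun w hw => ?_
    rw [← card_eq_of_comp g hw, ← nsmul_eq_mul, ← Finset.sum_const]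
    refine Finset.sum_congr rfl fun P hP => ?_
    rw [(Finset.mem_filter.1 hP).2]
  rw [h1, ← Finset.mul_sum, ← mul_assoc, ← orb_card_mul g]
  push_cast
  ring

/-- The sum counts the orbits, and an orbit is determined by its vector of letter counts. -/
lemma sum_inv_orb_le :
    ∑ w : I → F, ((orb w).card : ℝ)⁻¹ ≤ ((Fintype.card I : ℝ) + 1) ^ Fintype.card F := by
  have hlt : ∀ (w : I → F) j, cnt w j < Fintype.card I + 1 := fun w j =>
    Nat.lt_succ_of_le (Fintype.card_subtype_le _)
  let c : (I → F) → (F → Fin (Fintype.card I + 1)) := fun w j => ⟨cnt w j, hlt w j⟩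
  have hc : ∀ u w, c u = c w → u ∈ orb w := by
    intro u w h
    rw [mem_orb_iff_cnt]
    funext j
    have := congrFun h j
    simpa [c] using this
  rw [← Finset.sum_fiberwise_of_maps_to (s := Finset.univ) (t := Finset.univ)
      (g := c) (fun P _ => Finset.mem_univ _)]
  have : ∀ t ∈ (Finset.univ : Finset (F → Fin (Fintype.card I + 1))),
      ∑ w ∈ Finset.univ.filter (fun w => c w = t), ((orb w).card : ℝ)⁻¹ ≤ 1 := by
    intro t _
    by_cases ht : ∃ w0, c w0 = t
    · obtain ⟨w0, rfl⟩ := ht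
      calc _ = ∑ w ∈ Finset.univ.filter (fun w => c w = c w0), ((orb w0).card : ℝ)⁻¹ := by
            refine Finset.sum_congr rfl fun w hw => ?_
            rw [orb_eq_of_mem (hc _ _ (Finset.mem_filter.1 hw).2)]
        _ ≤ ∑ w ∈ orb w0, ((orb w0).card : ℝ)⁻¹ := by
            refine Finset.sum_le_sum_of_subset_of_nonneg ?_ (fun _ _ _ => by positivity)
            intro w hw
            exact hc _ _ (Finset.mem_filter.1 hw).2
        _ = 1 := by
            have := orb_card_pos w0
            rw [Finset.sum_const, nsmul_eq_mul, mul_inv_cancel₀]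
            positivity
    · push Not at ht
      rw [Finset.filter_false_of_mem (fun w _ => ht w)]
      simp
  refine (Finset.sum_le_sum this).trans ?_
  simp

/-- Stirling-free form of the statement that `c ↦ b ^ c / c!` is maximal at `c = b`. -/
lemma pow_mul_factorial_le (b c : ℕ) : b ^ c * b.factorial ≤ b ^ b * c.factorial := by
  rcases le_total b c with h | h
  · have := Nat.factorial_mul_pow_sub_le_factorial h
    calc b ^ c * b.factorial = b ^ b * (b.factorial * b ^ (c - b)) := by
          rw [show b ^ c = b ^ b * b ^ (c - b) by rw [← pow_add]; congr 1; omega]; ring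
      _ ≤ _ := Nat.mul_le_mul_left _ this
  · have : b.factorial ≤ b ^ (b - c) * c.factorial := by
      have h2 := Nat.factorial_mul_descFactorial (n := b) (k := b - c) (by omega)
      rw [show b - (b - c) = c by omega] at h2
      rw [← h2, mul_comm]
      exact Nat.mul_le_mul_right _ (Nat.descFactorial_le_pow _ _)
    calc b ^ c * b.factorial ≤ b ^ c * (b ^ (b - c) * c.factorial) := Nat.mul_le_mul_left _ this
      _ = _ := by
          rw [← mul_assoc, ← pow_add]; congr 2; omega

omit [DecidableEq I] in
lemma prod_comp_eq (b : F → ℕ) (w : I → F) : ∏ x, b (w x) = ∏ j, b j ^ cnt w j := by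
  rw [← Finset.prod_fiberwise_of_maps_to (s := Finset.univ) (t := Finset.univ)
      (g := w) (fun P _ => Finset.mem_univ _)]
  refine Finset.prod_congr rfl fun j _ => ?_
  rw [cnt, Fintype.card_subtype, ← Finset.prod_const]
  refine Finset.prod_congr rfl fun x hx => ?_
  rw [(Finset.mem_filter.1 hx).2]

omit [DecidableEq I] in
lemma sum_cnt (g : I → F) : ∑ j, cnt g j = Fintype.card I := by
  have := Finset.card_eq_sum_card_fiberwise (f := g)
    (s := Finset.univ) (t := Finset.univ) (fun P _ => Finset.mem_univ _)
  rw [Finset.card_univ] at this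
  rw [this]
  refine Finset.sum_congr rfl fun j _ => ?_
  rw [cnt, Fintype.card_subtype]

/-- Under the product measure whose marginals are the letter frequencies of `g`,
the orbit of `g` is the most likely orbit. -/
lemma orb_weight_le (g w : I → F) :
    (orb w).card * ∏ x, cnt g (w x) ≤ (orb g).card * ∏ x, cnt g (g x) := by
  have hpos : 0 < (∏ j, (cnt w j).factorial) * ∏ j, (cnt g j).factorial := by
    refine Nat.mul_pos (Finset.prod_pos fun _ _ => Nat.factorial_pos _)
      (Finset.prod_pos fun _ _ => Nat.factorial_pos _)
  refine Nat.le_of_mul_le_mul_right ?_ hpos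
  rw [prod_comp_eq (cnt g) w, prod_comp_eq (cnt g) g]
  have key : (∏ j, cnt g j ^ cnt w j) * ∏ j, (cnt g j).factorial ≤
      (∏ j, cnt g j ^ cnt g j) * ∏ j, (cnt w j).factorial := by
    rw [← Finset.prod_mul_distrib, ← Finset.prod_mul_distrib]
    exact Finset.prod_le_prod' fun j _ => pow_mul_factorial_le _ _
  calc _ = ((orb w).card * ∏ j, (cnt w j).factorial) *
        ((∏ j, cnt g j ^ cnt w j) * ∏ j, (cnt g j).factorial) := by ring
    _ = ((orb g).card * ∏ j, (cnt g j).factorial) *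
        ((∏ j, cnt g j ^ cnt w j) * ∏ j, (cnt g j).factorial) := by
        rw [orb_card_mul, orb_card_mul]
    _ ≤ ((orb g).card * ∏ j, (cnt g j).factorial) *
        ((∏ j, cnt g j ^ cnt g j) * ∏ j, (cnt w j).factorial) := Nat.mul_le_mul_left _ key
    _ = _ := by ring

/-- The orbit of `g` has polynomially large mass under the product measure with the letter
frequencies of `g`, since it is the most likely among polynomially many orbits. -/
lemma card_pow_le_orb (g : I → F) :
    (Fintype.card I : ℝ) ^ Fintype.card I ≤
      ((orb g).card * ∏ x, (cnt g (g x) : ℝ)) * ((Fintype.card I : ℝ) + 1) ^ Fintype.card F := by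
  have h1 : (Fintype.card I : ℝ) ^ Fintype.card I = ∑ w : I → F, ∏ x, (cnt g (w x) : ℝ) := by
    have := Finset.prod_univ_sum (fun _ : I => (Finset.univ : Finset F))
      (fun _ j => (cnt g j : ℝ))
    rw [Fintype.piFinset_univ] at this
    rw [← this, ← Nat.cast_sum, sum_cnt]
    simp
  rw [h1]
  calc ∑ w : I → F, ∏ x, (cnt g (w x) : ℝ)
      ≤ ∑ w : I → F, ((orb g).card * ∏ x, (cnt g (g x) : ℝ)) * ((orb w).card : ℝ)⁻¹ := by
        refine Finset.sum_le_sum fun w _ => ?_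
        have := orb_card_pos w
        rw [← div_eq_mul_inv, le_div_iff₀ (by positivity), mul_comm]
        exact_mod_cast orb_weight_le g w
    _ ≤ _ := by
        rw [← Finset.mul_sum]
        exact mul_le_mul_of_nonneg_left sum_inv_orb_le (by positivity)

end Orbits

/-! ### Characters of `F_p` and averages over permutations -/

section Charsum

variable {p : ℕ} [Fact p.Prime] {I : Type*} [Fintype I] [DecidableEq I]

/-- Orthogonality of the characters of `F_p^J`. -/
lemma sum_char {J : Type*} [Fintype J] [DecidableEq J] (z : J → ZMod p) :
    ∑ t : J → ZMod p, ZMod.stdAddChar (∑ x, t x * z x) =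
      if z = 0 then (p : ℂ) ^ Fintype.card J else 0 := by
  have h1 : ∀ t : J → ZMod p, ZMod.stdAddChar (∑ x, t x * z x) =
      ∏ x, ZMod.stdAddChar (t x * z x) := fun t => by
    exact map_prod (ZMod.stdAddChar (N := p)).toMonoidHom
      (fun x => Multiplicative.ofAdd (t x * z x)) Finset.univ
  have h2 := Finset.prod_univ_sum (fun _ : J => (Finset.univ : Finset (ZMod p)))
      (fun x s => ZMod.stdAddChar (s * z x))
  rw [Fintype.piFinset_univ] at h2
  simp only [h1]
  rw [← h2]
  simp only [AddChar.sum_mulShift _ (ZMod.isPrimitive_stdAddChar p), ZMod.card]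
  split_ifs with h
  · subst h; simp
  · obtain ⟨x, hx⟩ := Function.ne_iff.1 h
    exact Finset.prod_eq_zero (Finset.mem_univ x) (by rw [if_neg (by simpa using hx), Nat.cast_zero])

/-- Parseval: the second moment of an exponential sum over `ι` counts the collisions of `B`. -/
lemma parseval {J ι : Type*} [Fintype J] [DecidableEq J] [DecidableEq ι] (s : Finset ι)
    (B : ι → J → ZMod p) :
    ∑ t : J → ZMod p, ‖∑ i ∈ s, ZMod.stdAddChar (∑ x, t x * B i x)‖ ^ 2 =
      (p : ℝ) ^ Fintype.card J * ((s ×ˢ s).filter fun q => B q.1 = B q.2).card := by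
  have h : ∀ t : J → ZMod p,
      (((‖∑ i ∈ s, ZMod.stdAddChar (∑ x, t x * B i x)‖ ^ 2 : ℝ)) : ℂ) =
      ∑ q ∈ s ×ˢ s, ZMod.stdAddChar (∑ x, t x * (B q.1 - B q.2) x) := by
    intro t
    rw [Complex.ofReal_pow, ← Complex.mul_conj', map_sum, Finset.sum_mul_sum,
      ← Finset.sum_product']
    refine Finset.sum_congr rfl fun q _ => ?_
    rw [← AddChar.map_neg_eq_conj, ← AddChar.map_add_eq_mul]
    congr 1
    rw [← sub_eq_add_neg, ← Finset.sum_sub_distrib]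
    simp [mul_sub]
  have h2 : (((∑ t : J → ZMod p, ‖∑ i ∈ s, ZMod.stdAddChar (∑ x, t x * B i x)‖ ^ 2 : ℝ)) : ℂ) =
      (p : ℂ) ^ Fintype.card J * ((s ×ˢ s).filter fun q => B q.1 = B q.2).card := by
    rw [Complex.ofReal_sum]
    simp only [h]
    rw [Finset.sum_comm]
    simp only [sum_char, sub_eq_zero]
    rw [← Finset.sum_filter, Finset.sum_const, nsmul_eq_mul, mul_comm]
  exact_mod_cast h2

/-- The expectation of `ψ(⟨f, g ∘ P⟩)`, where `P` is a uniformly random permutation of the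
positions and `ψ` is the standard additive character of `F_p`. -/
noncomputable def avg (f g : I → ZMod p) : ℂ :=
  (∑ P : Equiv.Perm I, ZMod.stdAddChar (∑ x, f x * g (P x))) / (Fintype.card I).factorial

lemma orb_mul_avg (f g : I → ZMod p) :
    ((orb g).card : ℂ) * avg f g = ∑ w ∈ orb g, ZMod.stdAddChar (∑ x, f x * w x) := by
  have h := sum_perm_eq g (fun w => (ZMod.stdAddChar (∑ x, f x * w x) : ℂ))
  have h0 : ((Fintype.card I).factorial : ℂ) ≠ 0 := by
    exact_mod_cast Nat.factorial_ne_zero _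
  rw [avg, mul_div_assoc', div_eq_iff h0, mul_comm (∑ w ∈ orb g, _), ← h]
  rfl

lemma avg_comp (f g : I → ZMod p) (Q : Equiv.Perm I) : avg (f ∘ Q) g = avg f g := by
  unfold avg
  congr 1
  rw [← Equiv.sum_comp (Equiv.mulRight Q)]
  refine Finset.sum_congr rfl fun P _ => ?_
  congr 1
  rw [← Equiv.sum_comp Q (fun x => f x * g (P x))]
  rfl

lemma avg_comm (f g : I → ZMod p) : avg f g = avg g f := by
  unfold avg
  congr 1
  rw [← Equiv.sum_comp (Equiv.inv (Equiv.Perm I))]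
  refine Finset.sum_congr rfl fun P _ => ?_
  congr 1
  rw [← Equiv.sum_comp P]
  refine Finset.sum_congr rfl fun x _ => ?_
  simp [mul_comm]

lemma norm_avg_le_one (f g : I → ZMod p) : ‖avg f g‖ ≤ 1 := by
  unfold avg
  rw [norm_div, Complex.norm_natCast]
  refine div_le_one_of_le₀ ((norm_sum_le _ _).trans ?_) (by positivity)
  simp [AddChar.norm_apply, Fintype.card_perm]

lemma norm_avg_shift (f g : I → ZMod p) (c : ZMod p) :
    ‖avg f (fun x => c + g x)‖ = ‖avg f g‖ := by
  have : avg f (fun x => c + g x) = ZMod.stdAddChar (∑ x, f x * c) * avg f g := by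
    unfold avg
    rw [mul_div_assoc', Finset.mul_sum]
    congr 1
    refine Finset.sum_congr rfl fun P _ => ?_
    rw [← AddChar.map_add_eq_mul, ← Finset.sum_add_distrib]
    simp only [mul_add]
  rw [this, norm_mul, AddChar.norm_apply, one_mul]

/-- Uncertainty bound: the Fourier matrix of `F_p^I` has operator norm `p ^ (|I| / 2)`, and
`ψ(⟨·, ·⟩)` averages to `avg f g` over the product of the two orbits. -/
lemma avg_sq_le (f g : I → ZMod p) :
    ((orb f).card : ℝ) * (orb g).card * ‖avg f g‖ ^ 2 ≤ (p : ℝ) ^ Fintype.card I := by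
  have hpos := orb_card_pos g
  have h := parseval (orb g) (fun w : I → ZMod p => w)
  have hcol : (((orb g) ×ˢ (orb g)).filter fun q => q.1 = q.2).card = (orb g).card := by
    refine Finset.card_bij' (fun q _ => q.1) (fun w _ => (w, w)) ?_ ?_ ?_ ?_
    · intro q hq
      exact (Finset.mem_product.1 (Finset.mem_filter.1 hq).1).1
    · intro w hw; simp [hw]
    · rintro ⟨a, b⟩ hq
      have := (Finset.mem_filter.1 hq).2
      simp at this ⊢
      exact this
    · intro w hw; rfl
  rw [hcol] at h
  have h2 : ((orb f).card : ℝ) * ((orb g).card * ‖avg f g‖) ^ 2 ≤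
      (p : ℝ) ^ Fintype.card I * (orb g).card := by
    rw [← h]
    calc ((orb f).card : ℝ) * ((orb g).card * ‖avg f g‖) ^ 2 =
        ∑ t ∈ orb f, ‖∑ w ∈ orb g, ZMod.stdAddChar (∑ x, t x * w x)‖ ^ 2 := by
          rw [← nsmul_eq_mul, ← Finset.sum_const]
          refine Finset.sum_congr rfl fun t ht => ?_
          obtain ⟨Q, rfl⟩ := mem_orb.1 ht
          rw [← orb_mul_avg, avg_comp, norm_mul, Complex.norm_natCast]
      _ ≤ _ := Finset.sum_le_sum_of_subset_of_nonneg (Finset.subset_univ _)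
          (fun _ _ _ => by positivity)
  have hpos' : (0 : ℝ) < (orb g).card := by exact_mod_cast hpos
  refine le_of_mul_le_mul_right ?_ hpos'
  calc _ = ((orb f).card : ℝ) * ((orb g).card * ‖avg f g‖) ^ 2 := by ring
    _ ≤ _ := h2

end Charsum

/-! ### Independent transpositions of disjoint pairs -/

section Swaps

lemma sum_swap {R I : Type*} [CommRing R] [Fintype I] [DecidableEq I] (f w : I → R) {a b : I}
    (hab : a ≠ b) :
    ∑ x, f x * w (Equiv.swap a b x) = ∑ x, f x * w x + (f a - f b) * (w b - w a) := by
  rw [← sub_eq_iff_eq_add', ← Finset.sum_sub_distrib, Fintype.sum_eq_add a b hab]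
  · simp; ring
  · rintro x ⟨hxa, hxb⟩
    rw [Equiv.swap_apply_of_ne_of_ne hxa hxb, sub_self]

variable {p : ℕ} [Fact p.Prime] {I : Type*} [Fintype I] [DecidableEq I]

/-- Averaging an exponential sum over an orbit with respect to independent transpositions of
disjoint pairs of positions. -/
lemma sum_orb_swap (f g : I → ZMod p) {m : ℕ} (a b : Fin m → I)
    (hinj : Function.Injective (Sum.elim a b)) (S : Finset (Fin m)) :
    ∑ w ∈ orb g, (ZMod.stdAddChar (∑ x, f x * w x) : ℂ) =
      ∑ w ∈ orb g, (ZMod.stdAddChar (∑ x, f x * w x) : ℂ) *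
        ∏ l ∈ S, ((1 + ZMod.stdAddChar ((f (a l) - f (b l)) * (w (b l) - w (a l)))) / 2) := by
  have haa : Function.Injective a := fun i j h =>
    Sum.inl_injective (hinj (a₁ := Sum.inl i) (a₂ := Sum.inl j) h)
  have hbb : Function.Injective b := fun i j h =>
    Sum.inr_injective (hinj (a₁ := Sum.inr i) (a₂ := Sum.inr j) h)
  have hne : ∀ i j, a i ≠ b j := fun i j h => by
    have := hinj (a₁ := Sum.inl i) (a₂ := Sum.inr j) h
    simp at this
  induction S using Finset.induction_on with
  | empty => simp
  | insert k S hk ih =>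
    rw [ih]
    set G : (I → ZMod p) → ℂ := fun w => (ZMod.stdAddChar (∑ x, f x * w x) : ℂ) *
        ∏ l ∈ S, ((1 + ZMod.stdAddChar ((f (a l) - f (b l)) * (w (b l) - w (a l)))) / 2) with hG
    have h1 : ∑ w ∈ orb g, G w =
        ∑ w ∈ orb g, G w * ZMod.stdAddChar ((f (a k) - f (b k)) * (w (b k) - w (a k))) := by
      symm
      refine Finset.sum_bij' (fun w _ => w ∘ Equiv.swap (a k) (b k))
        (fun w _ => w ∘ Equiv.swap (a k) (b k)) ?_ ?_ ?_ ?_ ?_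
      · intro w hw
        obtain ⟨P, rfl⟩ := mem_orb.1 hw
        exact mem_orb.2 ⟨Equiv.swap (a k) (b k) |>.trans P, rfl⟩
      · intro w hw
        obtain ⟨P, rfl⟩ := mem_orb.1 hw
        exact mem_orb.2 ⟨Equiv.swap (a k) (b k) |>.trans P, rfl⟩
      · intro w _; funext x; simp
      · intro w _; funext x; simp
      · intro w _
        simp only [hG, Function.comp_apply]
        rw [sum_swap f w (hne k k), AddChar.map_add_eq_mul]
        have : ∀ l ∈ S, Equiv.swap (a k) (b k) (a l) = a l ∧
            Equiv.swap (a k) (b k) (b l) = b l := by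
          intro l hl
          have hlk : l ≠ k := fun h => hk (h ▸ hl)
          exact ⟨Equiv.swap_apply_of_ne_of_ne (fun h => hlk (haa h)) (hne _ _),
            Equiv.swap_apply_of_ne_of_ne (fun h => hne _ _ h.symm) (fun h => hlk (hbb h))⟩
        have hp : ∏ l ∈ S, ((1 + ZMod.stdAddChar ((f (a l) - f (b l)) *
              (w (Equiv.swap (a k) (b k) (b l)) - w (Equiv.swap (a k) (b k) (a l))))) / 2 : ℂ) =
            ∏ l ∈ S, ((1 + ZMod.stdAddChar ((f (a l) - f (b l)) *
              (w (b l) - w (a l)))) / 2 : ℂ) := by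
          refine Finset.prod_congr rfl fun l hl => ?_
          rw [(this l hl).1, (this l hl).2]
        rw [hp]
        ring
    have h2 : ∑ w ∈ orb g, G w = ∑ w ∈ orb g, (G w + G w *
        ZMod.stdAddChar ((f (a k) - f (b k)) * (w (b k) - w (a k)))) / 2 := by
      rw [← Finset.sum_div, Finset.sum_add_distrib, ← h1]
      ring
    rw [h2]
    refine Finset.sum_congr rfl fun w _ => ?_
    rw [Finset.prod_insert hk, hG]
    ring

/-- Independence of disjoint pairs of positions under a product weight. -/
lemma sum_prod_pairs {F : Type*} [Fintype F] [DecidableEq F] (c : F → ℝ) (h : F → F → ℝ) {m : ℕ}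
    (a b : Fin m → I) (hinj : Function.Injective (Sum.elim a b)) :
    ∑ w : I → F, (∏ x, c (w x)) * ∏ l, h (w (a l)) (w (b l)) =
      (∑ i, ∑ j, c i * c j * h i j) ^ m * (∑ i, c i) ^ (Fintype.card I - 2 * m) := by
  classical
  obtain ⟨e, hea, heb⟩ : ∃ e : (Fin m ⊕ Fin m) ⊕ {x // x ∉ Set.range (Sum.elim a b)} ≃ I,
      (∀ l, e (Sum.inl (Sum.inl l)) = a l) ∧ ∀ l, e (Sum.inl (Sum.inr l)) = b l := by
    refine ⟨(Equiv.sumCongr (Equiv.ofInjective _ hinj) (Equiv.refl _)).trans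
      (Equiv.Set.sumCompl (Set.range (Sum.elim a b))), fun l => ?_, fun l => ?_⟩
    · exact Equiv.Set.sumCompl_apply_inl _ _
    · exact Equiv.Set.sumCompl_apply_inl _ _
  have hcard : Fintype.card {x // x ∉ Set.range (Sum.elim a b)} = Fintype.card I - 2 * m := by
    have := Fintype.card_congr e
    simp only [Fintype.card_sum, Fintype.card_fin] at this
    omega
  rw [← hcard]
  have key : ∀ w : (Fin m ⊕ Fin m) ⊕ {x // x ∉ Set.range (Sum.elim a b)} → F,
      (∏ x, c (w (e.symm x))) * ∏ l, h (w (e.symm (a l))) (w (e.symm (b l))) =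
      (∏ l, c (w (Sum.inl (Sum.inl l))) * c (w (Sum.inl (Sum.inr l))) *
        h (w (Sum.inl (Sum.inl l))) (w (Sum.inl (Sum.inr l)))) * ∏ r, c (w (Sum.inr r)) := by
    intro w
    rw [Equiv.prod_comp e.symm (fun y => c (w y))]
    simp only [← hea, ← heb, Equiv.symm_apply_apply, Fintype.prod_sum_type,
      Finset.prod_mul_distrib]
    ring
  rw [← Equiv.sum_comp (Equiv.arrowCongr e (Equiv.refl F))]
  simp only [Equiv.arrowCongr_apply, Equiv.coe_refl, Function.comp_apply, id]
  simp only [key]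
  rw [← Equiv.sum_comp (Equiv.sumArrowEquivProdArrow _ _ _).symm, Fintype.sum_prod_type,
    ← Equiv.sum_comp (Equiv.sumArrowEquivProdArrow _ _ _).symm,
    ← Equiv.sum_comp (Equiv.arrowProdEquivProdArrow _ _ _)]
  simp only [Equiv.sumArrowEquivProdArrow_symm_apply_inl,
    Equiv.sumArrowEquivProdArrow_symm_apply_inr, ← Finset.mul_sum, ← Finset.sum_mul]
  have h3 := Finset.prod_univ_sum
    (fun _ : {x // x ∉ Set.range (Sum.elim a b)} => (Finset.univ : Finset F)) (fun _ i => c i)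
  rw [Fintype.piFinset_univ, Finset.prod_const, Finset.card_univ] at h3
  rw [h3]
  have h4 := Fintype.sum_pow (fun q : F × F => c q.1 * c q.2 * h q.1 q.2) m
  rw [Fintype.sum_prod_type] at h4
  rw [h4]
  rfl

end Swaps

/-! ### Exponential decay away from the constants -/

section Far

/-- Nontrivial values of the character stay away from `1`, uniformly. -/
lemma exists_char_gap (p : ℕ) [Fact p.Prime] : ∃ ρ : ℝ, 0 ≤ ρ ∧ ρ < 1 ∧
    ∀ z : ZMod p, z ≠ 0 → ‖(1 + ZMod.stdAddChar z) / 2‖ ≤ ρ := by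
  have : Nonempty {z : ZMod p // z ≠ 0} := ⟨1, one_ne_zero⟩
  obtain ⟨z0, hz0⟩ := Finite.exists_max
    fun z : {z : ZMod p // z ≠ 0} => ‖(1 + ZMod.stdAddChar z.1) / 2‖
  refine ⟨_, norm_nonneg _, ?_, fun z hz => hz0 ⟨z, hz⟩⟩
  have h1 : ‖(ZMod.stdAddChar z0.1 : ℂ)‖ = 1 := AddChar.norm_apply _ _
  have hne : (ZMod.stdAddChar z0.1 : ℂ) ≠ 1 := by
    intro h
    apply z0.2
    apply ZMod.injective_stdAddChar
    rw [h, AddChar.map_zero_eq_one]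
  have hpar := parallelogram_law_with_norm ℝ (1 : ℂ) (ZMod.stdAddChar z0.1)
  have hpos : 0 < ‖(1 : ℂ) - ZMod.stdAddChar z0.1‖ := by
    rw [norm_pos_iff]; exact sub_ne_zero.2 hne.symm
  rw [h1, norm_one] at hpar
  rw [norm_div, Complex.norm_ofNat, div_lt_one two_pos]
  nlinarith [norm_nonneg ((1 : ℂ) + ZMod.stdAddChar z0.1)]

variable {p : ℕ} [Fact p.Prime] {I : Type*} [Fintype I] [DecidableEq I]

/-- If `f` takes distinct values on each of `m` disjoint pairs of positions and no letter fills
more than a proportion `1 - ε` of `g`, then `avg f g` is exponentially small in `m`, up to a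
polynomial factor. -/
lemma norm_avg_le_of_pairs {ρ ε : ℝ} (hρ0 : 0 ≤ ρ) (hρ1 : ρ < 1)
    (hρ : ∀ z : ZMod p, z ≠ 0 → ‖(1 + ZMod.stdAddChar z) / 2‖ ≤ ρ)
    (f g : I → ZMod p) (hg : ∀ j, (cnt g j : ℝ) ≤ (1 - ε) * Fintype.card I)
    {m : ℕ} (a b : Fin m → I) (hinj : Function.Injective (Sum.elim a b))
    (hf : ∀ l, f (a l) ≠ f (b l)) :
    ‖avg f g‖ ≤ ((Fintype.card I : ℝ) + 1) ^ p * (1 - (1 - ρ) * ε) ^ m := by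
  set N : ℝ := (Fintype.card I : ℝ) with hN
  set h : ZMod p → ZMod p → ℝ := fun i j => if i = j then 1 else ρ with hh
  have hsum : ∑ j, (cnt g j : ℝ) = N := by rw [hN, ← sum_cnt g]; push_cast; rfl
  have hh0 : ∀ i j, 0 ≤ h i j := fun i j => by simp only [hh]; split_ifs <;> linarith
  -- the factor contributed by a pair
  have hκ : ∑ i, ∑ j, (cnt g i : ℝ) * cnt g j * h i j ≤ N ^ 2 * (1 - (1 - ρ) * ε) := by
    have e1 : ∀ i j, (cnt g i : ℝ) * cnt g j * h i j =
        ρ * (cnt g i * cnt g j) + (1 - ρ) * (if i = j then (cnt g i : ℝ) * cnt g j else 0) := by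
      intro i j
      simp only [hh]; split_ifs <;> ring
    simp only [e1, Finset.sum_add_distrib, ← Finset.mul_sum, Finset.sum_ite_eq,
      Finset.mem_univ, if_true, hsum, ← Finset.sum_mul]
    have e2 : ∑ i, (cnt g i : ℝ) * cnt g i ≤ N * ((1 - ε) * N) := by
      calc ∑ i, (cnt g i : ℝ) * cnt g i ≤ ∑ i, (cnt g i : ℝ) * ((1 - ε) * N) :=
            Finset.sum_le_sum fun i _ => mul_le_mul_of_nonneg_left (hg i) (by positivity)
        _ = _ := by rw [← Finset.sum_mul, hsum]
    nlinarith [mul_le_mul_of_nonneg_left e2 (sub_nonneg.2 hρ1.le)]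
  have hκ0 : 0 ≤ ∑ i, ∑ j, (cnt g i : ℝ) * cnt g j * h i j :=
    Finset.sum_nonneg fun i _ => Finset.sum_nonneg fun j _ =>
      mul_nonneg (by positivity) (hh0 i j)
  have h2m : 2 * m ≤ Fintype.card I := by
    have := Fintype.card_le_of_injective _ hinj
    simp only [Fintype.card_sum, Fintype.card_fin] at this
    omega
  have hop := orb_card_pos g
  have hop' : (0 : ℝ) < (orb g).card := by exact_mod_cast hop
  set W : ℝ := ∏ x, (cnt g (g x) : ℝ) with hW
  have hWpos : 0 < W := Finset.prod_pos fun x _ => by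
    have : 0 < cnt g (g x) := Fintype.card_pos_iff.2 ⟨⟨x, rfl⟩⟩
    exact_mod_cast this
  have hWw : ∀ w ∈ orb g, ∏ x, (cnt g (w x) : ℝ) = W := by
    intro w hw
    obtain ⟨P, rfl⟩ := mem_orb.1 hw
    exact Equiv.prod_comp P fun x => (cnt g (g x) : ℝ)
  have s1 : (orb g).card * ‖avg f g‖ ≤ ∑ w ∈ orb g, ∏ l, h (w (a l)) (w (b l)) := by
    rw [← Complex.norm_natCast, ← norm_mul, orb_mul_avg, sum_orb_swap f g a b hinj Finset.univ]
    refine (norm_sum_le _ _).trans (Finset.sum_le_sum fun w _ => ?_)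
    rw [norm_mul, AddChar.norm_apply, one_mul, norm_prod]
    refine Finset.prod_le_prod (fun _ _ => norm_nonneg _) fun l _ => ?_
    simp only [hh]
    split_ifs with hc
    · rw [hc]; simp
    · exact hρ _ (mul_ne_zero (sub_ne_zero.2 (hf l)) (sub_ne_zero.2 (Ne.symm hc)))
  have s2 : W * ∑ w ∈ orb g, ∏ l, h (w (a l)) (w (b l)) ≤
      (N ^ 2 * (1 - (1 - ρ) * ε)) ^ m * N ^ (Fintype.card I - 2 * m) := by
    have hnn : ∀ w : I → ZMod p,
        0 ≤ (∏ x, (cnt g (w x) : ℝ)) * ∏ l, h (w (a l)) (w (b l)) := fun w =>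
      mul_nonneg (Finset.prod_nonneg fun _ _ => Nat.cast_nonneg _)
        (Finset.prod_nonneg fun _ _ => hh0 _ _)
    calc W * ∑ w ∈ orb g, ∏ l, h (w (a l)) (w (b l))
        = ∑ w ∈ orb g, (∏ x, (cnt g (w x) : ℝ)) * ∏ l, h (w (a l)) (w (b l)) := by
          rw [Finset.mul_sum]
          exact Finset.sum_congr rfl fun w hw => by rw [hWw w hw]
      _ ≤ ∑ w : I → ZMod p, (∏ x, (cnt g (w x) : ℝ)) * ∏ l, h (w (a l)) (w (b l)) :=
          Finset.sum_le_sum_of_subset_of_nonneg (Finset.subset_univ _) fun w _ _ => hnn w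
      _ = (∑ i, ∑ j, (cnt g i : ℝ) * cnt g j * h i j) ^ m * N ^ (Fintype.card I - 2 * m) := by
          rw [sum_prod_pairs (fun j => (cnt g j : ℝ)) h a b hinj, hsum]
      _ ≤ _ := mul_le_mul_of_nonneg_right (pow_le_pow_left₀ hκ0 hκ m) (by positivity)
  have s3 : (N ^ 2 * (1 - (1 - ρ) * ε)) ^ m * N ^ (Fintype.card I - 2 * m) =
      N ^ Fintype.card I * (1 - (1 - ρ) * ε) ^ m := by
    rw [mul_pow, ← pow_mul, mul_right_comm, ← pow_add, Nat.add_sub_of_le h2m]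
  have s4 := card_pow_le_orb g
  rw [ZMod.card] at s4
  by_cases hN0 : Fintype.card I = 0
  · have hm : m = 0 := by omega
    have hb : (N + 1) ^ p * (1 - (1 - ρ) * ε) ^ m = 1 := by
      rw [hm, hN, hN0]; simp
    rw [hb]
    exact norm_avg_le_one f g
  have hκ1 : 0 ≤ 1 - (1 - ρ) * ε := by
    have : 0 < N ^ 2 := by
      have : 0 < Fintype.card I := Nat.pos_of_ne_zero hN0
      positivity
    exact nonneg_of_mul_nonneg_right (hκ0.trans hκ) this
  refine le_of_mul_le_mul_left ?_ (mul_pos hWpos hop')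
  calc W * (orb g).card * ‖avg f g‖ = W * ((orb g).card * ‖avg f g‖) := by ring
    _ ≤ W * ∑ w ∈ orb g, ∏ l, h (w (a l)) (w (b l)) :=
        mul_le_mul_of_nonneg_left s1 hWpos.le
    _ ≤ N ^ Fintype.card I * (1 - (1 - ρ) * ε) ^ m := s3 ▸ s2
    _ ≤ (((orb g).card * W) * (N + 1) ^ p) * (1 - (1 - ρ) * ε) ^ m :=
        mul_le_mul_of_nonneg_right s4 (pow_nonneg hκ1 m)
    _ = _ := by ring

/-- Two words, none of whose letters fills more than a proportion `1 - ε` of the positions,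
have an exponentially small average. -/
lemma norm_avg_far_le {ρ ε : ℝ} (hρ0 : 0 ≤ ρ) (hρ1 : ρ < 1)
    (hρ : ∀ z : ZMod p, z ≠ 0 → ‖(1 + ZMod.stdAddChar z) / 2‖ ≤ ρ)
    (f g : I → ZMod p) (hf : ∀ j, (cnt f j : ℝ) ≤ (1 - ε) * Fintype.card I)
    (hg : ∀ j, (cnt g j : ℝ) ≤ (1 - ε) * Fintype.card I) :
    ∃ m : ℕ, min ε (1 / p) * Fintype.card I ≤ m ∧
      ‖avg f g‖ ≤ ((Fintype.card I : ℝ) + 1) ^ p * (1 - (1 - ρ) * ε) ^ m := by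
  have hp0 : (0 : ℝ) < p := by exact_mod_cast (Fact.out : p.Prime).pos
  -- the most frequent letter of `f` is matched against the remaining letters
  obtain ⟨c, hc⟩ : ∃ c, (Fintype.card I : ℝ) / p ≤ cnt f c := by
    by_contra! hlt
    have h1 : ∑ j, (cnt f j : ℝ) < ∑ _j : ZMod p, (Fintype.card I : ℝ) / p :=
      Finset.sum_lt_sum_of_nonempty Finset.univ_nonempty fun j _ => hlt j
    rw [← Nat.cast_sum, sum_cnt] at h1
    simp only [Finset.sum_const, Finset.card_univ, ZMod.card, nsmul_eq_mul] at h1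
    rw [mul_div_cancel₀ _ hp0.ne'] at h1
    exact lt_irrefl _ h1
  have hcompl : (Fintype.card {x // ¬ f x = c} : ℝ) = Fintype.card I - cnt f c := by
    rw [Fintype.card_subtype_compl, Nat.cast_sub (Fintype.card_subtype_le _)]; rfl
  let m := min (cnt f c) (Fintype.card {x // ¬ f x = c})
  obtain ⟨a⟩ : Nonempty (Fin m ↪ {x // f x = c}) :=
    Function.Embedding.nonempty_of_card_le (by simp only [Fintype.card_fin]; exact min_le_left _ _)
  obtain ⟨b⟩ : Nonempty (Fin m ↪ {x // ¬ f x = c}) :=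
    Function.Embedding.nonempty_of_card_le (by simp only [Fintype.card_fin]; exact min_le_right _ _)
  refine ⟨m, ?_, norm_avg_le_of_pairs hρ0 hρ1 hρ f g hg (fun l => (a l).1) (fun l => (b l).1)
    ?_ fun l h => (b l).2 (h ▸ (a l).2)⟩
  · simp only [m, Nat.cast_min]
    refine le_min ?_ ?_
    · calc _ ≤ 1 / (p : ℝ) * Fintype.card I :=
            mul_le_mul_of_nonneg_right (min_le_right _ _) (by positivity)
        _ ≤ _ := by rw [one_div_mul_eq_div]; exact hc
    · rw [hcompl]
      have := hf c
      have h2 : min ε (1 / p) * Fintype.card I ≤ ε * Fintype.card I :=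
        mul_le_mul_of_nonneg_right (min_le_left _ _) (by positivity)
      linarith
  · rintro (i | i) (j | j) h
    · simp only [Sum.elim_inl] at h
      rw [a.injective (Subtype.ext h)]
    · simp only [Sum.elim_inl, Sum.elim_inr] at h
      exact absurd (h ▸ (a i).2) (b j).2
    · simp only [Sum.elim_inl, Sum.elim_inr] at h
      exact absurd (h ▸ (a j).2) (b i).2
    · simp only [Sum.elim_inr] at h
      rw [b.injective (Subtype.ext h)]

end Far

/-! ### Collisions of `A(P) v` for `v` of small support -/

section Corner

/-- A uniformly random permutation maps `S` into `B` with probability at most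
`(|B| / |I|) ^ |S|`. -/
lemma card_perm_into_le {I : Type*} [Fintype I] [DecidableEq I] (B S : Finset I) :
    (Finset.univ.filter fun P : Equiv.Perm I => ∀ x ∈ S, P x ∈ B).card * Fintype.card I ^ S.card ≤
      B.card ^ S.card * (Fintype.card I).factorial := by
  induction S using Finset.induction_on with
  | empty => simp [Fintype.card_perm]
  | insert x S hx ih =>
    set H := Finset.univ.filter fun P : Equiv.Perm I => ∀ z ∈ S, P z ∈ B with hH
    set H' := Finset.univ.filter fun P : Equiv.Perm I => ∀ z ∈ insert x S, P z ∈ B with hH'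
    have h1 : ∀ y ∈ Sᶜ, (H.filter fun P => P y ∈ B).card = H'.card := by
      intro y hy
      have hy' : y ∉ S := by simpa using hy
      have hs : ∀ z ∈ S, Equiv.swap x y z = z := fun z hz =>
        Equiv.swap_apply_of_ne_of_ne (fun h => hx (h ▸ hz)) (fun h => hy' (h ▸ hz))
      refine Finset.card_bij' (fun P _ => P * Equiv.swap x y) (fun P _ => P * Equiv.swap x y)
        ?_ ?_ ?_ ?_
      · intro P hP
        simp only [hH, hH', Finset.mem_filter, Finset.mem_univ, true_and, Finset.forall_mem_insert,
          Equiv.Perm.mul_apply, Equiv.swap_apply_left] at hP ⊢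
        exact ⟨hP.2, fun z hz => by rw [hs z hz]; exact hP.1 z hz⟩
      · intro P hP
        simp only [hH, hH', Finset.mem_filter, Finset.mem_univ, true_and, Finset.forall_mem_insert,
          Equiv.Perm.mul_apply, Equiv.swap_apply_right] at hP ⊢
        exact ⟨fun z hz => by rw [hs z hz]; exact hP.2 z hz, hP.1⟩
      · intro P _; simp [mul_assoc]
      · intro P _; simp [mul_assoc]
    have h2 : ∀ P ∈ H, (Sᶜ.filter fun y => P y ∈ B).card = B.card - S.card := by
      intro P hP
      have hP' : ∀ z ∈ S, P z ∈ B := by simpa [hH] using hP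
      have e1 : (Finset.univ.filter fun y => P y ∈ B).card = B.card := by
        refine Finset.card_bij (fun y _ => P y) (fun y hy => (Finset.mem_filter.1 hy).2)
          (fun y _ z _ h => P.injective h) fun b hb => ⟨P.symm b, by simpa using hb, by simp⟩
      have e2 : (Sᶜ.filter fun y => P y ∈ B) = (Finset.univ.filter fun y => P y ∈ B) \ S := by
        ext y; simp [and_comm]
      rw [e2, Finset.card_sdiff_of_subset (fun y hy => by simpa using hP' y hy), e1]
    have h3 : Sᶜ.card * H'.card = H.card * (B.card - S.card) := by
      calc Sᶜ.card * H'.card = ∑ y ∈ Sᶜ, (H.filter fun P => P y ∈ B).card := by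
            rw [Finset.sum_congr rfl h1, Finset.sum_const, smul_eq_mul]
        _ = ∑ P ∈ H, (Sᶜ.filter fun y => P y ∈ B).card := by
            simp only [Finset.card_filter]
            exact Finset.sum_comm
        _ = _ := by rw [Finset.sum_congr rfl h2, Finset.sum_const, smul_eq_mul]
    have hpos : 0 < Sᶜ.card := Finset.card_pos.2 ⟨x, by simpa using hx⟩
    have h4 : Fintype.card I * (B.card - S.card) ≤ B.card * Sᶜ.card := by
      rw [Finset.card_compl, Nat.mul_sub, Nat.mul_sub, mul_comm (Fintype.card I) B.card]
      have hle : B.card ≤ Fintype.card I := Finset.card_le_univ B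
      have := Nat.mul_le_mul_right S.card hle
      omega
    rw [Finset.card_insert_of_notMem hx]
    refine Nat.le_of_mul_le_mul_left ?_ hpos
    calc Sᶜ.card * (H'.card * Fintype.card I ^ (S.card + 1))
        = (Sᶜ.card * H'.card) * Fintype.card I ^ (S.card + 1) := by ring
      _ = (H.card * Fintype.card I ^ S.card) * (Fintype.card I * (B.card - S.card)) := by
          rw [h3]; ring
      _ ≤ (B.card ^ S.card * (Fintype.card I).factorial) * (B.card * Sᶜ.card) :=
          Nat.mul_le_mul ih h4
      _ = _ := by ring

variable {p : ℕ} [Fact p.Prime] {n d : ℕ}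

/-- The word on the `n * d` half-edges giving each of them the value of `v` at its vertex. -/
def lift (d : ℕ) (v : Fin n → ZMod p) : Fin n × Fin d → ZMod p := fun x => v x.1

/-- The product `A(P) v` over `F_p`. -/
def act (v : Fin n → ZMod p) (P : Equiv.Perm (Fin n × Fin d)) : Fin n → ZMod p :=
  fun k => ∑ i, v (P (k, i)).1

/-- The support of a vector. -/
def spt (v : Fin n → ZMod p) : Finset (Fin n) := Finset.univ.filter fun k => v k ≠ 0

lemma sum_lift (t v : Fin n → ZMod p) (P : Equiv.Perm (Fin n × Fin d)) :
    ∑ x, lift d t x * lift d v (P x) = ∑ k, t k * act v P k := by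
  rw [Fintype.sum_prod_type]
  refine Finset.sum_congr rfl fun k _ => ?_
  simp only [lift, act, Finset.mul_sum]

/-- If `A(P) v = A(Q) v`, then every vertex met by the half-edges that `P` or `Q` sends into the
support of `v` is met at least twice, so these half-edges lie over at most `d * |spt v|` vertices;
a union bound over that set of vertices controls the probability of a collision. -/
lemma card_collision_le (v : Fin n → ZMod p) (hs : d * (spt v).card ≤ n) :
    (((Finset.univ : Finset (Equiv.Perm (Fin n × Fin d))) ×ˢ
      (Finset.univ : Finset (Equiv.Perm (Fin n × Fin d)))).filter
      fun q => act v q.1 = act v q.2).card * ((n * d) ^ (d * (spt v).card)) ^ 2 ≤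
    n.choose (d * (spt v).card) *
      ((d * (spt v).card * d) ^ (d * (spt v).card) * (n * d).factorial) ^ 2 := by
  set s := d * (spt v).card with hsdef
  let S : Finset (Fin n × Fin d) := spt v ×ˢ Finset.univ
  have hS : S.card = s := by simp [S, hsdef, mul_comm]
  have hmemS : ∀ x, x ∈ S ↔ v x.1 ≠ 0 := fun x => by simp [S, spt]
  let H : Finset (Fin n) → Finset (Equiv.Perm (Fin n × Fin d)) := fun T =>
    Finset.univ.filter fun P => ∀ x ∈ S, P⁻¹ x ∈ T ×ˢ (Finset.univ : Finset (Fin d))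
  have hH : ∀ T ∈ Finset.powersetCard s (Finset.univ : Finset (Fin n)),
      (H T).card * (n * d) ^ s ≤ (s * d) ^ s * (n * d).factorial := by
    intro T hT
    have hT' : T.card = s := (Finset.mem_powersetCard.1 hT).2
    have := card_perm_into_le (T ×ˢ (Finset.univ : Finset (Fin d))) S
    rw [hS, Finset.card_product, Finset.card_univ, Fintype.card_prod, Fintype.card_fin,
      Fintype.card_fin, hT'] at this
    refine le_trans (le_of_eq ?_) this
    congr 1
    exact Finset.card_bij' (fun P _ => P⁻¹) (fun P _ => P⁻¹)
      (fun P hP => Finset.mem_filter.2 ⟨Finset.mem_univ _, (Finset.mem_filter.1 hP).2⟩)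
      (fun P hP => by
        refine Finset.mem_filter.2 ⟨Finset.mem_univ _, ?_⟩
        rw [inv_inv]
        exact (Finset.mem_filter.1 hP).2)
      (fun P _ => by simp) (fun P _ => by simp)
  have hsub : (((Finset.univ : Finset (Equiv.Perm (Fin n × Fin d))) ×ˢ
      (Finset.univ : Finset (Equiv.Perm (Fin n × Fin d)))).filter
      fun q => act v q.1 = act v q.2) ⊆
      (Finset.powersetCard s (Finset.univ : Finset (Fin n))).biUnion fun T => H T ×ˢ H T := by
    rintro ⟨P, Q⟩ hq
    have hPQ : act v P = act v Q := (Finset.mem_filter.1 hq).2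
    let c : Equiv.Perm (Fin n × Fin d) → Fin n → ℕ := fun R k =>
      (Finset.univ.filter fun i => R (k, i) ∈ S).card
    have hcsum : ∀ R, ∑ k, c R k = s := by
      intro R
      simp only [c, Finset.card_filter]
      rw [← Fintype.sum_prod_type (f := fun x => if R x ∈ S then 1 else 0),
        Equiv.sum_comp R (fun x => if x ∈ S then 1 else 0), ← Finset.card_filter]
      simp [hS]
    have hact0 : ∀ R k, c R k = 0 → act v R k = 0 := by
      intro R k h
      refine Finset.sum_eq_zero fun i _ => ?_
      have := Finset.filter_eq_empty_iff.1 (Finset.card_eq_zero.1 h) (Finset.mem_univ i)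
      rw [hmemS] at this
      simpa using this
    have hact1 : ∀ R k, c R k = 1 → act v R k ≠ 0 := by
      intro R k h
      obtain ⟨i, hi⟩ := Finset.card_eq_one.1 h
      have hi' : ∀ j, R (k, j) ∈ S ↔ j = i := fun j => by
        have := Finset.ext_iff.1 hi j
        simpa using this
      have : act v R k = v (R (k, i)).1 := by
        refine Finset.sum_eq_single i (fun j _ hj => ?_) (fun h => absurd (Finset.mem_univ _) h)
        have := (hi' j).not.2 hj
        rw [hmemS] at this
        simpa using this
      rw [this, ← hmemS]
      exact (hi' i).2 rfl
    let U : Finset (Fin n) := Finset.univ.filter fun k => c P k + c Q k ≠ 0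
    have hU2 : ∀ k ∈ U, 2 ≤ c P k + c Q k := by
      intro k hk
      have hk0 : c P k + c Q k ≠ 0 := (Finset.mem_filter.1 hk).2
      by_contra hlt
      have hk' := congrFun hPQ k
      have h01 : (c P k = 1 ∧ c Q k = 0) ∨ (c P k = 0 ∧ c Q k = 1) := by omega
      rcases h01 with ⟨h1, h0⟩ | ⟨h0, h1⟩
      · exact hact1 P k h1 (hk'.trans (hact0 Q k h0))
      · exact hact1 Q k h1 (hk'.symm.trans (hact0 P k h0))
    have hUs : U.card ≤ s := by
      have h1 : U.card * 2 ≤ ∑ k ∈ U, (c P k + c Q k) := by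
        rw [← smul_eq_mul, ← Finset.sum_const]
        exact Finset.sum_le_sum hU2
      have h2 : ∑ k ∈ U, (c P k + c Q k) ≤ ∑ k, (c P k + c Q k) :=
        Finset.sum_le_sum_of_subset (Finset.subset_univ _)
      have h3 : ∑ k, (c P k + c Q k) = s + s := by
        rw [Finset.sum_add_distrib, hcsum, hcsum]
      omega
    obtain ⟨T, hUT, hT⟩ := Finset.exists_superset_card_eq hUs (by simpa using hs)
    have hmem : ∀ R : Equiv.Perm (Fin n × Fin d), (∀ k, c R k ≠ 0 → k ∈ U) → R ∈ H T := by
      intro R hR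
      simp only [H, Finset.mem_filter, Finset.mem_univ, true_and, Finset.mem_product, and_true]
      intro x hx
      refine hUT (hR _ ?_)
      refine Finset.card_ne_zero_of_mem (a := (R⁻¹ x).2) ?_
      simpa using hx
    refine Finset.mem_biUnion.2 ⟨T, Finset.mem_powersetCard.2 ⟨Finset.subset_univ _, hT⟩,
      Finset.mem_product.2 ⟨hmem P fun k hk => ?_, hmem Q fun k hk => ?_⟩⟩
    · simp only [U, Finset.mem_filter, Finset.mem_univ, true_and]; omega
    · simp only [U, Finset.mem_filter, Finset.mem_univ, true_and]; omega
  calc _ ≤ (∑ T ∈ Finset.powersetCard s (Finset.univ : Finset (Fin n)), (H T ×ˢ H T).card) *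
        ((n * d) ^ s) ^ 2 :=
        Nat.mul_le_mul_right _ ((Finset.card_le_card hsub).trans Finset.card_biUnion_le)
    _ = ∑ T ∈ Finset.powersetCard s (Finset.univ : Finset (Fin n)),
        ((H T).card * (n * d) ^ s) ^ 2 := by
        rw [Finset.sum_mul]
        refine Finset.sum_congr rfl fun T _ => ?_
        rw [Finset.card_product]; ring
    _ ≤ ∑ T ∈ Finset.powersetCard s (Finset.univ : Finset (Fin n)),
        ((s * d) ^ s * (n * d).factorial) ^ 2 :=
        Finset.sum_le_sum fun T hT => Nat.pow_le_pow_left (hH T hT) 2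
    _ = _ := by simp [Finset.card_powersetCard]

end Corner

/-! ### The corner: vectors of small support -/

section CornerSum

variable {p : ℕ} [Fact p.Prime] {n d : ℕ}

/-- The second moment of `t ↦ avg (lift d t) (lift d v)` is a collision probability. -/
lemma sum_norm_avg_sq (v : Fin n → ZMod p) :
    ∑ t, ‖avg (lift d t) (lift d v)‖ ^ 2 * ((n * d).factorial : ℝ) ^ 2 =
      (p : ℝ) ^ n * (((Finset.univ : Finset (Equiv.Perm (Fin n × Fin d))) ×ˢ
      (Finset.univ : Finset (Equiv.Perm (Fin n × Fin d)))).filter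
        fun q => act v q.1 = act v q.2).card := by
  have h := parseval (Finset.univ : Finset (Equiv.Perm (Fin n × Fin d))) (act v)
  rw [Fintype.card_fin] at h
  rw [← h]
  refine Finset.sum_congr rfl fun t _ => ?_
  have h0 : ((n * d).factorial : ℝ) ≠ 0 := by exact_mod_cast Nat.factorial_ne_zero _
  unfold avg
  simp only [sum_lift]
  rw [norm_div, Complex.norm_natCast, Fintype.card_prod, Fintype.card_fin, Fintype.card_fin,
    div_pow, div_mul_cancel₀ _ (pow_ne_zero 2 h0)]

/-- The bound `n.choose k ≤ (e n / k) ^ k`, in a form that includes `k = 0`. -/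
lemma choose_le_exp (n k : ℕ) : (n.choose k : ℝ) * (k : ℝ) ^ k ≤ (Real.exp 1 * n) ^ k := by
  have h1 : (n.choose k : ℝ) ≤ (n : ℝ) ^ k / k.factorial := Nat.choose_le_pow_div k n
  have h2 : (k : ℝ) ^ k / k.factorial ≤ Real.exp k :=
    Real.pow_div_factorial_le_exp _ (Nat.cast_nonneg k) k
  calc (n.choose k : ℝ) * (k : ℝ) ^ k ≤ (n : ℝ) ^ k / k.factorial * (k : ℝ) ^ k := by gcongr
    _ = (n : ℝ) ^ k * ((k : ℝ) ^ k / k.factorial) := by ring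
    _ ≤ (n : ℝ) ^ k * Real.exp k := by gcongr
    _ = _ := by rw [mul_pow, ← Real.exp_nat_mul, mul_one, mul_comm]

/-- Cauchy–Schwarz in `t`, combined with the collision bound and `choose_le_exp`. -/
lemma corner_single (v : Fin n → ZMod p) (hn : 0 < n) (hd : 0 < d)
    (hs : d * (spt v).card ≤ n) :
    (∑ t, ‖avg (lift d t) (lift d v)‖) ^ 2 ≤ ((p : ℝ) ^ n) ^ 2 *
      (Real.exp 1 * (d * (spt v).card) / n) ^ (d * (spt v).card) := by
  have hcol : ((((Finset.univ : Finset (Equiv.Perm (Fin n × Fin d))) ×ˢ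
      (Finset.univ : Finset (Equiv.Perm (Fin n × Fin d)))).filter
        fun q => act v q.1 = act v q.2).card : ℝ) *
      (((n * d : ℕ) : ℝ) ^ (d * (spt v).card)) ^ 2 ≤
    (n.choose (d * (spt v).card) : ℝ) *
      (((d * (spt v).card * d : ℕ) : ℝ) ^ (d * (spt v).card) * ((n * d).factorial : ℝ)) ^ 2 := by
    exact_mod_cast card_collision_le v hs
  have hsq := sum_norm_avg_sq (d := d) v
  set col : ℝ := ((((Finset.univ : Finset (Equiv.Perm (Fin n × Fin d))) ×ˢ
      (Finset.univ : Finset (Equiv.Perm (Fin n × Fin d)))).filter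
        fun q => act v q.1 = act v q.2).card : ℝ)
  have hcast : ((d : ℝ) * ((spt v).card : ℝ)) = ((d * (spt v).card : ℕ) : ℝ) := by push_cast; ring
  rw [hcast]
  set s := d * (spt v).card
  have hn' : (0 : ℝ) < n := by exact_mod_cast hn
  have hd' : (0 : ℝ) < d := by exact_mod_cast hd
  have hF : (0 : ℝ) < ((n * d).factorial : ℝ) := by exact_mod_cast Nat.factorial_pos _
  have hch := choose_le_exp n s
  have hcs : (∑ t, ‖avg (lift d t) (lift d v)‖) ^ 2 ≤
      (p : ℝ) ^ n * ∑ t, ‖avg (lift d t) (lift d v)‖ ^ 2 := by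
    have := sq_sum_le_card_mul_sum_sq (s := (Finset.univ : Finset (Fin n → ZMod p)))
      (f := fun t => ‖avg (lift d t) (lift d v)‖)
    simpa [ZMod.card] using this
  rw [← Finset.sum_mul] at hsq
  set A := ∑ t, ‖avg (lift d t) (lift d v)‖ ^ 2
  have hcol2 : col * (n : ℝ) ^ (2 * s) ≤
      n.choose s * (s : ℝ) ^ (2 * s) * ((n * d).factorial : ℝ) ^ 2 := by
    refine le_of_mul_le_mul_right ?_ (pow_pos hd' (2 * s))
    push_cast at hcol
    calc _ = col * ((n * d : ℝ) ^ s) ^ 2 := by rw [← pow_mul, mul_comm s 2, mul_pow]; ring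
      _ ≤ _ := hcol
      _ = _ := by rw [mul_pow, mul_pow, mul_pow, ← pow_mul, ← pow_mul, mul_comm s 2]; ring
  have hcol3 : col * (n : ℝ) ^ (2 * s) ≤
      (Real.exp 1 * n) ^ s * (s : ℝ) ^ s * ((n * d).factorial : ℝ) ^ 2 := by
    refine hcol2.trans ?_
    rw [two_mul s, pow_add, ← mul_assoc]
    gcongr
  refine hcs.trans ?_
  rw [sq ((p : ℝ) ^ n), mul_assoc]
  refine mul_le_mul_of_nonneg_left ?_ (by positivity)
  refine le_of_mul_le_mul_right ?_ (mul_pos (pow_pos hF 2) (pow_pos hn' (2 * s)))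
  calc A * (((n * d).factorial : ℝ) ^ 2 * (n : ℝ) ^ (2 * s))
      = (p : ℝ) ^ n * (col * (n : ℝ) ^ (2 * s)) := by rw [← mul_assoc, hsq]; ring
    _ ≤ (p : ℝ) ^ n * ((Real.exp 1 * n) ^ s * (s : ℝ) ^ s * ((n * d).factorial : ℝ) ^ 2) := by
        gcongr
    _ = _ := by
        rw [div_pow, mul_pow, mul_pow, two_mul s, pow_add]
        field_simp

lemma card_spt_eq_le (k : ℕ) :
    (Finset.univ.filter fun v : Fin n → ZMod p => (spt v).card = k).card ≤ n.choose k * p ^ k := by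
  have hsub : (Finset.univ.filter fun v : Fin n → ZMod p => (spt v).card = k) ⊆
      (Finset.powersetCard k (Finset.univ : Finset (Fin n))).biUnion fun T =>
        Fintype.piFinset fun i => if i ∈ T then Finset.univ else {0} := by
    intro v hv
    refine Finset.mem_biUnion.2 ⟨spt v, Finset.mem_powersetCard.2 ⟨Finset.subset_univ _,
      (Finset.mem_filter.1 hv).2⟩, Fintype.mem_piFinset.2 fun i => ?_⟩
    by_cases h : v i = 0 <;> simp [spt, h]
  calc _ ≤ ∑ T ∈ Finset.powersetCard k (Finset.univ : Finset (Fin n)),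
        (Fintype.piFinset fun i => if i ∈ T then (Finset.univ : Finset (ZMod p)) else {0}).card :=
        (Finset.card_le_card hsub).trans Finset.card_biUnion_le
    _ = ∑ T ∈ Finset.powersetCard k (Finset.univ : Finset (Fin n)), p ^ k := by
        refine Finset.sum_congr rfl fun T hT => ?_
        rw [Fintype.card_piFinset, ← (Finset.mem_powersetCard.1 hT).2,
          ← Finset.prod_filter_mul_prod_filter_not Finset.univ (· ∈ T)]
        rw [Finset.prod_congr (s₁ := Finset.univ.filter fun i => i ∉ T) rfl
          (g := fun _ => 1) fun i hi => by rw [if_neg (Finset.mem_filter.1 hi).2,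
            Finset.card_singleton]]
        rw [Finset.prod_congr (s₁ := Finset.univ.filter fun i => i ∈ T) rfl
          (g := fun _ => p) fun i hi => by rw [if_pos (Finset.mem_filter.1 hi).2,
            Finset.card_univ, ZMod.card]]
        simp
    _ = _ := by simp [Finset.card_powersetCard]

/-- The square of the constant in the corner estimate: the vectors with support of size `k`
contribute at most `p ^ n * √(cornerConst * k / n) ^ k`. Supports of size at most
`n / (4 * cornerConst)`, for which this base is at most `1 / 2`, are treated as small. -/
noncomputable def cornerConst (p d : ℕ) : ℝ := Real.exp 1 ^ 5 * (p : ℝ) ^ 2 * (d : ℝ) ^ 3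

omit [Fact p.Prime] in
lemma one_le_cornerConst (hp : 1 ≤ p) (hd : 1 ≤ d) :
    Real.exp 1 * d ≤ cornerConst p d ∧ 1 ≤ cornerConst p d := by
  have he : (1 : ℝ) ≤ Real.exp 1 := Real.one_le_exp zero_le_one
  have hp' : (1 : ℝ) ≤ p := by exact_mod_cast hp
  have hd' : (1 : ℝ) ≤ d := by exact_mod_cast hd
  have h1 : Real.exp 1 * d ≤ cornerConst p d := by
    calc Real.exp 1 * d = Real.exp 1 ^ 1 * 1 * (d : ℝ) ^ 1 := by ring
      _ ≤ Real.exp 1 ^ 5 * (p : ℝ) ^ 2 * (d : ℝ) ^ 3 := by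
        gcongr
        · norm_num
        · exact one_le_pow₀ hp'
        · norm_num
  exact ⟨h1, le_trans (by nlinarith) h1⟩

/-- The total contribution of the vectors with support of size `k`. -/
lemma corner_level (hd : 3 ≤ d) (hn : 0 < n) {k : ℕ} (hk : 0 < k)
    (hkn : 4 * cornerConst p d * k ≤ n) :
    ∑ v ∈ Finset.univ.filter (fun v : Fin n → ZMod p => (spt v).card = k),
      ∑ t, ‖avg (lift d t) (lift d v)‖ ≤
      (p : ℝ) ^ n * (2 * √(cornerConst p d) / √n * (k * (1 / 2) ^ k)) := by
  have hp1 : 1 ≤ p := (Fact.out : p.Prime).one_lt.le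
  obtain ⟨hC1, hC2⟩ := one_le_cornerConst (p := p) (d := d) hp1 (by omega)
  have hn' : (0 : ℝ) < n := by exact_mod_cast hn
  have hk' : (1 : ℝ) ≤ k := by exact_mod_cast hk
  have hd' : (0 : ℝ) < d := by exact_mod_cast (by omega : 0 < d)
  have hp' : (0 : ℝ) < p := by exact_mod_cast hp1
  have he : (1 : ℝ) ≤ Real.exp 1 := Real.one_le_exp zero_le_one
  have hedk : Real.exp 1 * (d * k) ≤ n := by nlinarith
  have hdk : d * k ≤ n := by
    have : ((d * k : ℕ) : ℝ) ≤ n := by push_cast; nlinarith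
    exact_mod_cast this
  set X : ℝ := Real.exp 1 * (d * k) / n with hX
  have hX0 : 0 < X := by positivity
  have hX1 : X ≤ 1 := (div_le_one hn').2 hedk
  have hsingle : ∀ v ∈ Finset.univ.filter (fun v : Fin n → ZMod p => (spt v).card = k),
      ∑ t, ‖avg (lift d t) (lift d v)‖ ≤ (p : ℝ) ^ n * (X * √X) ^ k := by
    intro v hv
    have hvk : (spt v).card = k := (Finset.mem_filter.1 hv).2
    have := corner_single (d := d) v hn (by omega) (by rw [hvk]; exact hdk)
    rw [hvk] at this
    refine le_of_sq_le_sq ?_ (by positivity)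
    refine this.trans ?_
    have e : ((X * √X) ^ k) ^ 2 = X ^ (3 * k) := by
      rw [← pow_mul, mul_comm k 2, pow_mul, mul_pow, Real.sq_sqrt hX0.le, ← pow_succ, ← pow_mul]
    rw [mul_pow, e]
    refine mul_le_mul_of_nonneg_left ?_ (by positivity)
    exact pow_le_pow_of_le_one hX0.le hX1 (Nat.mul_le_mul_right k hd)
  refine (Finset.sum_le_sum hsingle).trans ?_
  rw [Finset.sum_const, nsmul_eq_mul, mul_left_comm]
  refine mul_le_mul_of_nonneg_left ?_ (by positivity)
  have hcount : ((Finset.univ.filter fun v : Fin n → ZMod p => (spt v).card = k).card : ℝ) ≤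
      (Real.exp 1 * n * p / k) ^ k := by
    have h1 : ((Finset.univ.filter fun v : Fin n → ZMod p => (spt v).card = k).card : ℝ) ≤
        n.choose k * (p : ℝ) ^ k := by exact_mod_cast card_spt_eq_le k
    rw [div_pow, le_div_iff₀ (by positivity), mul_pow]
    calc _ ≤ n.choose k * (p : ℝ) ^ k * (k : ℝ) ^ k := by gcongr
      _ = n.choose k * (k : ℝ) ^ k * (p : ℝ) ^ k := by ring
      _ ≤ _ := mul_le_mul_of_nonneg_right (choose_le_exp n k) (by positivity)
  -- the product of the two bounds is `q ^ k` with `q = √(C k / n) ≤ 1 / 2`.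
  set q : ℝ := Real.exp 1 * n * p / k * (X * √X) with hq
  have hq0 : 0 ≤ q := by positivity
  have hq2 : q ^ 2 = cornerConst p d * k / n := by
    rw [hq, mul_pow, mul_pow, Real.sq_sqrt hX0.le, hX, cornerConst]
    field_simp
  have hqh : q ≤ 1 / 2 := by
    refine le_of_sq_le_sq ?_ (by norm_num)
    rw [hq2, div_le_iff₀ hn']
    linarith
  have hqk : q ≤ √(cornerConst p d) / √n * k := by
    refine le_of_sq_le_sq ?_ (by positivity)
    rw [hq2, mul_pow, div_pow, Real.sq_sqrt (by linarith), Real.sq_sqrt hn'.le, div_mul_eq_mul_div]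
    gcongr
    nlinarith
  obtain ⟨j, rfl⟩ : ∃ j, k = j + 1 := ⟨k - 1, by omega⟩
  calc _ ≤ (Real.exp 1 * n * p / (j + 1 : ℕ)) ^ (j + 1) * (X * √X) ^ (j + 1) := by gcongr
    _ = q ^ j * q := by rw [← mul_pow, ← pow_succ]
    _ ≤ (1 / 2) ^ j * (√(cornerConst p d) / √n * (j + 1 : ℕ)) := by gcongr
    _ = _ := by rw [pow_succ]; ring

lemma sum_mul_half_pow_le (m : ℕ) :
    ∑ k ∈ Finset.range m, ((k : ℝ) * (1 / 2) ^ k) ≤ 2 := by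
  have h : ∀ m : ℕ, ∑ k ∈ Finset.range m, ((k : ℝ) * (1 / 2) ^ k) =
      2 - (m + 1) * (1 / 2) ^ m * 2 := by
    intro m
    induction m with
    | zero => norm_num
    | succ m ih =>
      rw [Finset.sum_range_succ, ih, pow_succ]
      push_cast
      ring
  rw [h]
  have : (0 : ℝ) ≤ (m + 1) * (1 / 2) ^ m * 2 := by positivity
  linarith

/-- Nonzero vectors of small support contribute `O(n ^ (-1/2))`. -/
lemma corner_sum (hd : 3 ≤ d) (hn : 0 < n) :
    ∑ v ∈ Finset.univ.filter (fun v : Fin n → ZMod p =>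
        v ≠ 0 ∧ 4 * cornerConst p d * (spt v).card ≤ n),
      ∑ t, ‖avg (lift d t) (lift d v)‖ ≤ (p : ℝ) ^ n * (4 * √(cornerConst p d) / √n) := by
  set V := Finset.univ.filter (fun v : Fin n → ZMod p =>
        v ≠ 0 ∧ 4 * cornerConst p d * (spt v).card ≤ n) with hV
  have hmaps : ∀ v ∈ V, (spt v).card ∈ Finset.range (n + 1) := fun v _ => by
    have := Finset.card_le_univ (spt v)
    rw [Fintype.card_fin] at this
    simpa using Nat.lt_succ_of_le this
  rw [← Finset.sum_fiberwise_of_maps_to hmaps]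
  have hterm : ∀ k ∈ Finset.range (n + 1), ∑ v ∈ V.filter (fun v => (spt v).card = k),
      ∑ t, ‖avg (lift d t) (lift d v)‖ ≤
      (p : ℝ) ^ n * (2 * √(cornerConst p d) / √n * (k * (1 / 2) ^ k)) := by
    intro k _
    by_cases hk : 0 < k ∧ 4 * cornerConst p d * k ≤ n
    · refine le_trans (Finset.sum_le_sum_of_subset_of_nonneg ?_ fun v _ _ => by positivity)
        (corner_level hd hn hk.1 hk.2)
      intro v hv
      exact Finset.mem_filter.2 ⟨Finset.mem_univ _, (Finset.mem_filter.1 hv).2⟩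
    · rw [Finset.filter_eq_empty_iff.2, Finset.sum_empty]
      · positivity
      · intro v hv hvk
        obtain ⟨hv0, hvn⟩ := (Finset.mem_filter.1 hv).2
        rw [hvk] at hvn
        refine hk ⟨Nat.pos_of_ne_zero fun h0 => hv0 ?_, hvn⟩
        rw [h0, Finset.card_eq_zero] at hvk
        ext i
        by_contra hi
        have : i ∈ spt v := Finset.mem_filter.2 ⟨Finset.mem_univ _, hi⟩
        rw [hvk] at this
        exact absurd this (Finset.notMem_empty i)
  refine (Finset.sum_le_sum hterm).trans ?_
  rw [← Finset.mul_sum, ← Finset.mul_sum]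
  refine mul_le_mul_of_nonneg_left ?_ (by positivity)
  calc _ ≤ 2 * √(cornerConst p d) / √n * 2 := by gcongr; exact sum_mul_half_pow_le _
    _ = _ := by ring

end CornerSum

/-! ### The bulk: vectors far from the constants -/

section Bulk

variable {p : ℕ} [Fact p.Prime] {n d : ℕ}

omit [Fact p.Prime] in
lemma cnt_lift (v : Fin n → ZMod p) (j : ZMod p) : cnt (lift d v) j = cnt v j * d := by
  unfold cnt
  have e : {x : Fin n × Fin d // lift d v x = j} ≃ {k : Fin n // v k = j} × Fin d :=
    { toFun := fun x => (⟨x.1.1, x.2⟩, x.1.2)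
      invFun := fun y => ⟨(y.1.1, y.2), y.1.2⟩
      left_inv := fun _ => rfl
      right_inv := fun _ => rfl }
  rw [Fintype.card_congr e, Fintype.card_prod, Fintype.card_fin]

/-- Rearranging the `d` layers of `lift d v` independently stays inside its orbit. -/
lemma orb_pow_le_orb_lift (v : Fin n → ZMod p) :
    (orb v).card ^ d ≤ (orb (lift d v)).card := by
  have h : (Fintype.piFinset fun _ : Fin d => orb v).card = (orb v).card ^ d := by
    simp [Fintype.card_piFinset]
  rw [← h]
  refine Finset.card_le_card_of_injOn (fun w x => w x.2 x.1) ?_ ?_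
  · intro w hw
    have hw' : ∀ i, w i ∈ orb v := Fintype.mem_piFinset.1 hw
    choose P hP using fun i => mem_orb.1 (hw' i)
    refine mem_orb.2 ⟨Equiv.prodCongrLeft P, ?_⟩
    funext x
    simp [hP, lift]
  · intro w _ w' _ hww
    funext i k
    exact congrFun hww (k, i)

/-- Uniform exponential decay away from the constant vectors; the cube matches the use made
of it in `bulk_single`. -/
lemma exists_far_decay (p d : ℕ) [Fact p.Prime] (hd : 0 < d) {ε : ℝ} (hε0 : 0 < ε) (hε1 : ε ≤ 1) :
    ∃ μ : ℝ, 0 ≤ μ ∧ μ < 1 ∧ ∀ (n : ℕ) (t v : Fin n → ZMod p),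
      (∀ j, (cnt t j : ℝ) ≤ (1 - ε) * n) → (∀ j, (cnt v j : ℝ) ≤ (1 - ε) * n) →
      ‖avg (lift d t) (lift d v)‖ ≤ (((n : ℝ) * d + 1) ^ p * μ ^ n) ^ 3 := by
  obtain ⟨ρ, hρ0, hρ1, hρ⟩ := exists_char_gap p
  have hp1 : 1 ≤ p := (Fact.out : p.Prime).one_lt.le
  have hp0 : (0 : ℝ) < p := by exact_mod_cast hp1
  have hd' : (0 : ℝ) < d := by exact_mod_cast hd
  set κ : ℝ := 1 - (1 - ρ) * ε with hκ
  have hκ0 : 0 ≤ κ := by nlinarith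
  have hκ1 : κ < 1 := by nlinarith [mul_pos (sub_pos.2 hρ1) hε0]
  set η : ℝ := min ε (1 / p) with hη
  have hη0 : 0 < η := lt_min hε0 (by positivity)
  refine ⟨κ ^ (η * d / 3), Real.rpow_nonneg hκ0 _, Real.rpow_lt_one hκ0 hκ1 (by positivity), ?_⟩
  intro n t v ht hv
  have hcnt : ∀ w : Fin n → ZMod p, (∀ j, (cnt w j : ℝ) ≤ (1 - ε) * n) →
      ∀ j, (cnt (lift d w) j : ℝ) ≤ (1 - ε) * Fintype.card (Fin n × Fin d) := by
    intro w hw j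
    rw [cnt_lift, Fintype.card_prod, Fintype.card_fin, Fintype.card_fin]
    push_cast
    rw [← mul_assoc]
    exact mul_le_mul_of_nonneg_right (hw j) hd'.le
  obtain ⟨m, hm, hle⟩ := norm_avg_far_le hρ0 hρ1 hρ (lift d t) (lift d v) (hcnt t ht) (hcnt v hv)
  rw [Fintype.card_prod, Fintype.card_fin, Fintype.card_fin] at hm hle
  push_cast at hm hle
  have hN : (1 : ℝ) ≤ (n : ℝ) * d + 1 := by
    have : (0 : ℝ) ≤ (n : ℝ) * d := by positivity
    linarith
  have hpow : κ ^ m ≤ ((κ ^ (η * d / 3)) ^ n) ^ 3 := by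
    rw [← pow_mul, ← Real.rpow_natCast κ m, ← Real.rpow_natCast (κ ^ (η * d / 3)),
      ← Real.rpow_mul hκ0]
    refine Real.rpow_le_rpow_of_exponent_ge' hκ0 hκ1.le (by positivity) ?_
    refine le_trans (le_of_eq ?_) hm
    push_cast
    ring
  rw [mul_pow]
  refine hle.trans (mul_le_mul ?_ hpow (by positivity) (by positivity))
  exact le_self_pow₀ (one_le_pow₀ hN) (by norm_num)

/-- Interpolation between the orbit bound `avg_sq_le` and a decay bound for `avg`. -/
lemma bulk_single (hd : 3 ≤ d) (t v : Fin n → ZMod p) {B : ℝ} (hB0 : 0 ≤ B)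
    (hB : ‖avg (lift d t) (lift d v)‖ ≤ B ^ 3) :
    ‖avg (lift d t) (lift d v)‖ ≤
      (p : ℝ) ^ n * B * (((orb t).card : ℝ)⁻¹ * ((orb v).card : ℝ)⁻¹) := by
  have h1 := norm_avg_le_one (lift d t) (lift d v)
  have h2 := avg_sq_le (lift d t) (lift d v)
  have h0 := norm_nonneg (avg (lift d t) (lift d v))
  set a := ‖avg (lift d t) (lift d v)‖
  have ht : (0 : ℝ) < (orb t).card := by exact_mod_cast orb_card_pos t
  have hv : (0 : ℝ) < (orb v).card := by exact_mod_cast orb_card_pos v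
  have hp0 : (0 : ℝ) < p := by exact_mod_cast (Fact.out : p.Prime).pos
  have ht' : ((orb t).card : ℝ) ^ d ≤ (orb (lift d t)).card := by
    exact_mod_cast orb_pow_le_orb_lift t
  have hv' : ((orb v).card : ℝ) ^ d ≤ (orb (lift d v)).card := by
    exact_mod_cast orb_pow_le_orb_lift v
  set y : ℝ := (orb t).card * (orb v).card / (p : ℝ) ^ n with hy
  have hy0 : 0 < y := by positivity
  have hya : y ^ d * a ^ 2 ≤ 1 := by
    rw [hy, div_pow, mul_pow, div_mul_eq_mul_div, div_le_one (by positivity), ← pow_mul]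
    rw [Fintype.card_prod, Fintype.card_fin, Fintype.card_fin] at h2
    refine le_trans ?_ h2
    gcongr
  have hcube : (y * a) ^ 3 ≤ a := by
    rcases le_total y 1 with hle | hge
    · calc (y * a) ^ 3 ≤ (1 * a) ^ 3 := by gcongr
        _ ≤ a := by
          rw [one_mul]
          exact pow_le_of_le_one h0 h1 (by norm_num)
    · have : y ^ 3 * a ^ 2 ≤ 1 := le_trans (by gcongr) hya
      calc (y * a) ^ 3 = y ^ 3 * a ^ 2 * a := by ring
        _ ≤ 1 * a := by gcongr
        _ = a := one_mul a
  have hyB : y * a ≤ B := le_of_pow_le_pow_left₀ (by norm_num) hB0 (hcube.trans hB)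
  have : a ≤ B / y := by rw [le_div_iff₀ hy0, mul_comm]; exact hyB
  refine this.trans (le_of_eq ?_)
  rw [hy]
  field_simp

lemma bulk_sum (hd : 3 ≤ d) (T V : Finset (Fin n → ZMod p)) {B : ℝ} (hB0 : 0 ≤ B)
    (hB : ∀ t ∈ T, ∀ v ∈ V, ‖avg (lift d t) (lift d v)‖ ≤ B ^ 3) :
    ∑ v ∈ V, ∑ t ∈ T, ‖avg (lift d t) (lift d v)‖ ≤
      (p : ℝ) ^ n * (B * (((n : ℝ) + 1) ^ p * ((n : ℝ) + 1) ^ p)) := by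
  have hs : ∀ W : Finset (Fin n → ZMod p),
      ∑ w ∈ W, ((orb w).card : ℝ)⁻¹ ≤ ((n : ℝ) + 1) ^ p := by
    intro W
    have := sum_inv_orb_le (I := Fin n) (F := ZMod p)
    rw [Fintype.card_fin, ZMod.card] at this
    exact (Finset.sum_le_sum_of_subset_of_nonneg (Finset.subset_univ W)
      fun w _ _ => by positivity).trans this
  calc _ ≤ ∑ v ∈ V, ∑ t ∈ T,
        (p : ℝ) ^ n * B * (((orb t).card : ℝ)⁻¹ * ((orb v).card : ℝ)⁻¹) :=
        Finset.sum_le_sum fun v hv => Finset.sum_le_sum fun t ht =>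
          bulk_single hd t v hB0 (hB t ht v hv)
    _ = (p : ℝ) ^ n * B *
        ((∑ t ∈ T, ((orb t).card : ℝ)⁻¹) * ∑ v ∈ V, ((orb v).card : ℝ)⁻¹) := by
        rw [Finset.sum_mul_sum, Finset.sum_comm, Finset.mul_sum]
        refine Finset.sum_congr rfl fun t _ => ?_
        rw [Finset.mul_sum]
    _ ≤ (p : ℝ) ^ n * B * (((n : ℝ) + 1) ^ p * ((n : ℝ) + 1) ^ p) := by
        gcongr
        · exact hs T
        · exact hs V
    _ = _ := by ring

end Bulk

/-! ### Fourier inversion and assembly -/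

section Assembly

variable {p : ℕ} [Fact p.Prime] {n d : ℕ}

lemma adjMat_mulVec (v : Fin n → ZMod p) (P : Equiv.Perm (Fin n × Fin d)) :
    ((adjMat n d P).map (Int.cast : ℤ → ZMod p)).mulVec v = act v P := by
  funext k
  simp only [Matrix.mulVec, dotProduct, adjMat, Matrix.map_apply, Matrix.of_apply, act,
    Nat.card_eq_fintype_card, Fintype.card_subtype, Int.cast_natCast, Finset.card_filter]
  push_cast
  simp only [Finset.sum_mul]
  rw [Finset.sum_comm]
  refine Finset.sum_congr rfl fun i _ => ?_
  simp

/-- The number of permutations `P` with `A(P) v = 0`. -/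
def zeroCount (d : ℕ) (v : Fin n → ZMod p) : ℕ :=
  (Finset.univ.filter fun P : Equiv.Perm (Fin n × Fin d) => act v P = 0).card

/-- Fourier inversion for the event `A(P) v = 0`. -/
lemma sum_avg_eq (v : Fin n → ZMod p) :
    ∑ t, avg (lift d t) (lift d v) =
      (p : ℂ) ^ n * (zeroCount d v / ((n * d).factorial : ℂ)) := by
  unfold avg
  simp only [sum_lift]
  rw [← Finset.sum_div, Finset.sum_comm]
  simp only [sum_char]
  rw [Fintype.card_prod, Fintype.card_fin, Fintype.card_fin, ← mul_div_assoc]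
  congr 1
  rw [← Finset.sum_filter, Finset.sum_const, nsmul_eq_mul, mul_comm]
  rfl

lemma zeroCount_zero : zeroCount d (0 : Fin n → ZMod p) = (n * d).factorial := by
  unfold zeroCount
  rw [Finset.filter_true_of_mem, Finset.card_univ, Fintype.card_perm, Fintype.card_prod,
    Fintype.card_fin, Fintype.card_fin]
  intro P _
  funext k
  simp [act]

lemma zeroCount_const (hgcd : Nat.gcd p d = 1) (hn : 0 < n) {c : ZMod p} (hc : c ≠ 0) :
    zeroCount d (fun _ : Fin n => c) = 0 := by
  unfold zeroCount
  rw [Finset.card_eq_zero, Finset.filter_eq_empty_iff]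
  intro P _ h
  have h1 := congrFun h ⟨0, hn⟩
  simp only [act, Finset.sum_const, Finset.card_univ, Fintype.card_fin, nsmul_eq_mul,
    Pi.zero_apply, mul_eq_zero, hc, or_false] at h1
  rw [ZMod.natCast_eq_zero_iff] at h1
  have h2 : p ∣ 1 := hgcd ▸ Nat.dvd_gcd dvd_rfl h1
  exact (Fact.out : p.Prime).one_lt.ne' (Nat.dvd_one.1 h2)

/-- The constant vectors. -/
def consts (p n : ℕ) [Fact p.Prime] : Finset (Fin n → ZMod p) :=
  Finset.univ.image fun c : ZMod p => fun _ => c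

lemma card_consts_le : (consts p n).card ≤ p := by
  refine Finset.card_image_le.trans (le_of_eq ?_)
  rw [Finset.card_univ, ZMod.card]

lemma sum_consts_avg (hgcd : Nat.gcd p d = 1) (hn : 0 < n) :
    ∑ v ∈ consts p n, ∑ t, avg (lift d t) (lift d v) = (p : ℂ) ^ n := by
  have h0 : ((n * d).factorial : ℂ) ≠ 0 := by exact_mod_cast Nat.factorial_ne_zero _
  rw [Finset.sum_eq_single (0 : Fin n → ZMod p)]
  · rw [sum_avg_eq, zeroCount_zero, div_self h0, mul_one]
  · intro v hv hv0
    obtain ⟨c, -, rfl⟩ := Finset.mem_image.1 hv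
    rw [sum_avg_eq, zeroCount_const hgcd hn fun hc => hv0 (by rw [hc]; rfl)]
    simp
  · intro h
    exact absurd (Finset.mem_image.2 ⟨0, Finset.mem_univ _, rfl⟩) h

/-- The sum over all pairs is twice the contribution of the constants, up to the overlap of
the two families of constants and the nonconstant pairs. -/
lemma norm_total_sub_le (hgcd : Nat.gcd p d = 1) (hn : 0 < n) :
    ‖∑ v : Fin n → ZMod p, ∑ t, avg (lift d t) (lift d v) - 2 * (p : ℂ) ^ n‖ ≤
      (p : ℝ) ^ 2 +
        ∑ v ∈ (consts p n)ᶜ, ∑ t ∈ (consts p n)ᶜ, ‖avg (lift d t) (lift d v)‖ := by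
  set K := consts p n
  set F : (Fin n → ZMod p) → (Fin n → ZMod p) → ℂ := fun v t => avg (lift d t) (lift d v)
  have hK : ∑ v ∈ K, ∑ t, F v t = (p : ℂ) ^ n := sum_consts_avg hgcd hn
  have hsymm : ∀ v t, F v t = F t v := fun v t => avg_comm _ _
  have hK' : ∑ v, ∑ t ∈ K, F v t = (p : ℂ) ^ n := by
    rw [← hK, Finset.sum_comm]
    exact Finset.sum_congr rfl fun v _ => Finset.sum_congr rfl fun t _ => hsymm _ _
  have h1 : ∑ v, ∑ t, F v t = ∑ v ∈ K, ∑ t, F v t + ∑ v ∈ Kᶜ, ∑ t, F v t :=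
    (Finset.sum_add_sum_compl K _).symm
  have h2 : ∑ v ∈ Kᶜ, ∑ t, F v t =
      ∑ v ∈ Kᶜ, ∑ t ∈ K, F v t + ∑ v ∈ Kᶜ, ∑ t ∈ Kᶜ, F v t := by
    rw [← Finset.sum_add_distrib]
    exact Finset.sum_congr rfl fun v _ => (Finset.sum_add_sum_compl K _).symm
  have h3 : ∑ v, ∑ t ∈ K, F v t = ∑ v ∈ K, ∑ t ∈ K, F v t + ∑ v ∈ Kᶜ, ∑ t ∈ K, F v t :=
    (Finset.sum_add_sum_compl K _).symm
  have h4 : ∑ v, ∑ t, F v t - 2 * (p : ℂ) ^ n =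
      -∑ v ∈ K, ∑ t ∈ K, F v t + ∑ v ∈ Kᶜ, ∑ t ∈ Kᶜ, F v t := by
    rw [h1, h2, hK]
    rw [hK'] at h3
    linear_combination -h3
  rw [h4]
  refine (norm_add_le _ _).trans (add_le_add ?_ ?_)
  · rw [norm_neg]
    have hc : (K.card : ℝ) ≤ p := by exact_mod_cast card_consts_le
    calc ‖∑ v ∈ K, ∑ t ∈ K, F v t‖ ≤ ∑ v ∈ K, ∑ t ∈ K, (1 : ℝ) :=
          (norm_sum_le _ _).trans <| Finset.sum_le_sum fun v _ =>
            (norm_sum_le _ _).trans <| Finset.sum_le_sum fun t _ => norm_avg_le_one _ _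
      _ = (K.card : ℝ) ^ 2 := by simp [sq]
      _ ≤ _ := by gcongr
  · exact (norm_sum_le _ _).trans <| Finset.sum_le_sum fun v _ => norm_sum_le _ _

/-- The nonconstant vectors differing from some constant in at most `n / (4 * cornerConst)`
coordinates. -/
noncomputable def nearConst (p n d : ℕ) [Fact p.Prime] : Finset (Fin n → ZMod p) :=
  (consts p n)ᶜ.filter fun v =>
    ∃ c : ZMod p, 4 * cornerConst p d * (spt (fun k => c + v k)).card ≤ n

lemma sum_biUnion_le_sum {α ι : Type*} [DecidableEq α] [DecidableEq ι] (s : Finset ι)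
    (t : ι → Finset α) {f : α → ℝ} (hf : ∀ x, 0 ≤ f x) :
    ∑ x ∈ s.biUnion t, f x ≤ ∑ i ∈ s, ∑ x ∈ t i, f x := by
  induction s using Finset.induction_on with
  | empty => simp
  | insert i s hi ih =>
    rw [Finset.biUnion_insert, Finset.sum_insert hi]
    have h := Finset.sum_union_inter (s₁ := t i) (s₂ := s.biUnion t) (f := f)
    have h0 : 0 ≤ ∑ x ∈ t i ∩ s.biUnion t, f x := Finset.sum_nonneg fun x _ => hf x
    linarith

/-- The corner bound summed over the `p` constants, using `norm_avg_shift`. -/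
lemma near_sum (hd : 3 ≤ d) (hn : 0 < n) :
    ∑ v ∈ nearConst p n d, ∑ t, ‖avg (lift d t) (lift d v)‖ ≤
      p * ((p : ℝ) ^ n * (4 * √(cornerConst p d) / √n)) := by
  set W := Finset.univ.filter (fun v : Fin n → ZMod p =>
        v ≠ 0 ∧ 4 * cornerConst p d * (spt v).card ≤ n) with hW
  have hsub : nearConst p n d ⊆ Finset.univ.biUnion fun c : ZMod p =>
      W.image fun w k => -c + w k := by
    intro v hv
    obtain ⟨hvK, c, hc⟩ := Finset.mem_filter.1 hv
    refine Finset.mem_biUnion.2 ⟨c, Finset.mem_univ _, Finset.mem_image.2 ⟨fun k => c + v k,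
      Finset.mem_filter.2 ⟨Finset.mem_univ _, fun h => ?_, hc⟩, ?_⟩⟩
    · refine Finset.mem_compl.1 hvK (Finset.mem_image.2 ⟨-c, Finset.mem_univ _, ?_⟩)
      funext k
      have := congrFun h k
      simp only [Pi.zero_apply] at this
      exact neg_eq_of_add_eq_zero_right this
    · funext k
      simp
  set G : (Fin n → ZMod p) → ℝ := fun v => ∑ t, ‖avg (lift d t) (lift d v)‖ with hG
  have hG0 : ∀ v, 0 ≤ G v := fun v => Finset.sum_nonneg fun t _ => norm_nonneg _
  have hshift : ∀ (c : ZMod p) (w : Fin n → ZMod p), G (fun k => c + w k) = G w := fun c w =>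
    Finset.sum_congr rfl fun t _ => norm_avg_shift (lift d t) (lift d w) c
  calc ∑ v ∈ nearConst p n d, G v
      ≤ ∑ v ∈ Finset.univ.biUnion fun c : ZMod p => W.image fun w k => -c + w k, G v :=
        Finset.sum_le_sum_of_subset_of_nonneg hsub fun v _ _ => hG0 v
    _ ≤ ∑ c : ZMod p, ∑ v ∈ W.image (fun w k => -c + w k), G v :=
        sum_biUnion_le_sum _ _ hG0
    _ = ∑ c : ZMod p, ∑ w ∈ W, G w := by
        refine Finset.sum_congr rfl fun c _ => ?_
        rw [Finset.sum_image fun a _ b _ hab => funext fun k => add_left_cancel (congrFun hab k)]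
        exact Finset.sum_congr rfl fun w _ => hshift (-c) w
    _ = p * ∑ w ∈ W, G w := by
        rw [Finset.sum_const, Finset.card_univ, ZMod.card, nsmul_eq_mul]
    _ ≤ _ := by
        gcongr
        exact corner_sum hd hn

lemma cnt_le_of_far (hd : 3 ≤ d) {v : Fin n → ZMod p} (hv : v ∈ (consts p n)ᶜ \ nearConst p n d)
    (j : ZMod p) : (cnt v j : ℝ) ≤ (1 - 1 / (4 * cornerConst p d)) * n := by
  obtain ⟨hvK, hvn⟩ := Finset.mem_sdiff.1 hv
  have hC := (one_le_cornerConst (p := p) (d := d) (Fact.out : p.Prime).one_lt.le (by omega)).2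
  have h1 : (n : ℝ) < 4 * cornerConst p d * (spt (fun k => -j + v k)).card := by
    by_contra hlt
    exact hvn (Finset.mem_filter.2 ⟨hvK, -j, not_lt.1 hlt⟩)
  have h2 : cnt v j + (spt (fun k => -j + v k)).card = n := by
    have := Finset.card_filter_add_card_filter_not (s := (Finset.univ : Finset (Fin n)))
      (fun k => v k = j)
    rw [Finset.card_univ, Fintype.card_fin] at this
    rw [cnt, Fintype.card_subtype, spt]
    have e : (fun k => -j + v k ≠ 0) = fun k => ¬ v k = j := by
      funext k
      rw [ne_eq, neg_add_eq_zero, @eq_comm _ j]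
    simp only [e]
    exact this
  have h3 : (cnt v j : ℝ) + (spt (fun k => -j + v k)).card = n := by exact_mod_cast h2
  have h4 : 1 / (4 * cornerConst p d) * n ≤ (spt (fun k => -j + v k)).card := by
    rw [one_div, inv_mul_le_iff₀ (by linarith)]
    exact h1.le
  linarith

/-- Pairs of nonconstant vectors: either member is near a constant, or both are in the bulk. -/
lemma nonconst_sum (hd : 3 ≤ d) : ∃ μ : ℝ, 0 ≤ μ ∧ μ < 1 ∧ ∀ n : ℕ, 0 < n →
    ∑ v ∈ (consts p n)ᶜ, ∑ t ∈ (consts p n)ᶜ, ‖avg (lift d t) (lift d v)‖ ≤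
      (p : ℝ) ^ n * (2 * p * (4 * √(cornerConst p d) / √n) +
        ((n : ℝ) * d + 1) ^ p * μ ^ n * (((n : ℝ) + 1) ^ p * ((n : ℝ) + 1) ^ p)) := by
  have hC := (one_le_cornerConst (p := p) (d := d) (Fact.out : p.Prime).one_lt.le (by omega)).2
  obtain ⟨μ, hμ0, hμ1, hμ⟩ := exists_far_decay p d (by omega)
    (ε := 1 / (4 * cornerConst p d)) (by positivity)
    (by rw [div_le_one (by linarith)]; linarith)
  refine ⟨μ, hμ0, hμ1, fun n hn => ?_⟩
  set K := consts p n
  set A := nearConst p n d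
  have hA : A ⊆ Kᶜ := Finset.filter_subset _ _
  set G : (Fin n → ZMod p) → (Fin n → ZMod p) → ℝ :=
    fun v t => ‖avg (lift d t) (lift d v)‖ with hG
  have hG0 : ∀ v t, 0 ≤ G v t := fun v t => norm_nonneg _
  have hsymm : ∀ v t, G v t = G t v := fun v t => by rw [hG]; simp only [avg_comm]
  have hnear : ∑ v ∈ A, ∑ t, G v t ≤ p * ((p : ℝ) ^ n * (4 * √(cornerConst p d) / √n)) :=
    near_sum hd hn
  have h1 : ∑ v ∈ A, ∑ t ∈ Kᶜ, G v t ≤ ∑ v ∈ A, ∑ t, G v t :=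
    Finset.sum_le_sum fun v _ => Finset.sum_le_sum_of_subset_of_nonneg (Finset.subset_univ _)
      fun t _ _ => hG0 v t
  have h2 : ∑ v ∈ Kᶜ \ A, ∑ t ∈ A, G v t ≤ ∑ v ∈ A, ∑ t, G v t := by
    rw [Finset.sum_comm]
    refine Finset.sum_le_sum fun v _ => ?_
    rw [Finset.sum_congr rfl fun t _ => hsymm t v]
    exact Finset.sum_le_sum_of_subset_of_nonneg (Finset.subset_univ _) fun t _ _ => hG0 v t
  have h3 : ∑ v ∈ Kᶜ \ A, ∑ t ∈ Kᶜ \ A, G v t ≤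
      (p : ℝ) ^ n * (((n : ℝ) * d + 1) ^ p * μ ^ n * (((n : ℝ) + 1) ^ p * ((n : ℝ) + 1) ^ p)) :=
    bulk_sum hd _ _ (by positivity) fun t ht v hv =>
      hμ n t v (cnt_le_of_far hd ht) (cnt_le_of_far hd hv)
  have h4 : ∑ v ∈ Kᶜ \ A, ∑ t ∈ Kᶜ, G v t =
      ∑ v ∈ Kᶜ \ A, ∑ t ∈ Kᶜ \ A, G v t + ∑ v ∈ Kᶜ \ A, ∑ t ∈ A, G v t := by
    rw [← Finset.sum_add_distrib]
    exact Finset.sum_congr rfl fun v _ => (Finset.sum_sdiff hA).symm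
  rw [← Finset.sum_sdiff hA, h4]
  linarith

lemma tendsto_poly_mul_pow (p d : ℕ) {μ : ℝ} (hμ0 : 0 ≤ μ) (hμ1 : μ < 1) :
    Filter.Tendsto (fun n : ℕ => ((n : ℝ) * d + 1) ^ p * μ ^ n *
      (((n : ℝ) + 1) ^ p * ((n : ℝ) + 1) ^ p)) Filter.atTop (nhds 0) := by
  have h := (tendsto_pow_const_mul_const_pow_of_abs_lt_one (3 * p)
    (by rwa [abs_of_nonneg hμ0])).const_mul (((d : ℝ) + 1) ^ p * 2 ^ p * 2 ^ p)
  rw [mul_zero] at h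
  refine squeeze_zero' (Filter.Eventually.of_forall fun n => by positivity) ?_ h
  filter_upwards [Filter.eventually_ge_atTop 1] with n hn
  have hn' : (1 : ℝ) ≤ n := by exact_mod_cast hn
  calc _ ≤ ((n : ℝ) * d + n) ^ p * μ ^ n * (((n : ℝ) + n) ^ p * ((n : ℝ) + n) ^ p) := by gcongr
    _ = (((d : ℝ) + 1) * n) ^ p * μ ^ n * ((2 * (n : ℝ)) ^ p * (2 * (n : ℝ)) ^ p) := by ring
    _ = _ := by rw [mul_pow, mul_pow, pow_mul' (n : ℝ) 3 p]; ring

end Assembly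

/-- For fixed `d ≥ 3` and a prime `p` with `gcd(p,d) = 1`, the total
number of pairs `(v, 𝒫)` with `v ∈ F_p^n \ {0}` and `𝒫` a permutation of the configuration
model such that `A(𝒫)·v = 0` over `F_p`, normalized by `(nd)!`, converges to `1`. -/
theorem stmt0 (d p : ℕ) (hd : 3 ≤ d) [Fact p.Prime] (hgcd : Nat.gcd p d = 1) :
    Filter.Tendsto
      (fun n : ℕ =>
        (∑ v ∈ Finset.univ.filter (fun v : Fin n → ZMod p => v ≠ 0),
            (Nat.card {P : Equiv.Perm (Fin n × Fin d) //
              ((adjMat n d P).map (Int.cast : ℤ → ZMod p)).mulVec v = 0} : ℝ))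
          / (Nat.factorial (n * d) : ℝ))
      Filter.atTop (nhds 1) := by
  obtain ⟨μ, hμ0, hμ1, hμ⟩ := nonconst_sum (p := p) hd
  have hp1 : (1 : ℝ) < p := by exact_mod_cast (Fact.out : p.Prime).one_lt
  have hlim : Filter.Tendsto (fun n : ℕ => (p : ℝ) ^ 2 * ((p : ℝ) ^ n)⁻¹ +
      (2 * p * (4 * √(cornerConst p d) / √n) +
        ((n : ℝ) * d + 1) ^ p * μ ^ n * (((n : ℝ) + 1) ^ p * ((n : ℝ) + 1) ^ p)))
      Filter.atTop (nhds 0) := by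
    have e1 : Filter.Tendsto (fun n : ℕ => (p : ℝ) ^ 2 * ((p : ℝ) ^ n)⁻¹)
        Filter.atTop (nhds 0) := by
      simpa using ((tendsto_pow_atTop_atTop_of_one_lt hp1).inv_tendsto_atTop).const_mul
        ((p : ℝ) ^ 2)
    have e2 : Filter.Tendsto (fun n : ℕ => 2 * (p : ℝ) * (4 * √(cornerConst p d) / √(n : ℝ)))
        Filter.atTop (nhds 0) := by
      simpa using ((Real.tendsto_sqrt_atTop.comp tendsto_natCast_atTop_atTop).const_div_atTop
        (4 * √(cornerConst p d))).const_mul (2 * (p : ℝ))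
    simpa using e1.add (e2.add (tendsto_poly_mul_pow p d hμ0 hμ1))
  rw [tendsto_iff_norm_sub_tendsto_zero]
  refine squeeze_zero' (Filter.Eventually.of_forall fun n => norm_nonneg _) ?_ hlim
  filter_upwards [Filter.eventually_ge_atTop 1] with n hn
  have hpn : (0 : ℝ) < (p : ℝ) ^ n := by positivity
  have hF : ((n * d).factorial : ℝ) ≠ 0 := by exact_mod_cast Nat.factorial_ne_zero _
  have hcount : ∀ v : Fin n → ZMod p, Nat.card {P : Equiv.Perm (Fin n × Fin d) //
      ((adjMat n d P).map (Int.cast : ℤ → ZMod p)).mulVec v = 0} = zeroCount d v := by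
    intro v
    simp only [adjMat_mulVec]
    rw [Nat.card_eq_fintype_card, Fintype.card_subtype, zeroCount]
  simp only [hcount]
  have hsplit : ∑ v ∈ Finset.univ.filter (fun v : Fin n → ZMod p => v ≠ 0), (zeroCount d v : ℝ) =
      ∑ v : Fin n → ZMod p, (zeroCount d v : ℝ) - (n * d).factorial := by
    rw [Finset.filter_ne', ← Finset.add_sum_erase Finset.univ _ (Finset.mem_univ 0),
      zeroCount_zero]
    ring
  have htot := (norm_total_sub_le (d := d) hgcd hn).trans (add_le_add_right (hμ n hn) _)
  simp only [sum_avg_eq] at htot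
  rw [← Finset.mul_sum, ← Finset.sum_div, mul_comm 2, ← mul_sub, norm_mul, norm_pow,
    Complex.norm_natCast] at htot
  have hcast : ((∑ v : Fin n → ZMod p, (zeroCount d v : ℂ)) / ((n * d).factorial : ℂ) - 2) =
      (((∑ v : Fin n → ZMod p, (zeroCount d v : ℝ)) / ((n * d).factorial : ℝ) - 2 : ℝ) : ℂ) := by
    push_cast
    rfl
  rw [hcast, Complex.norm_real] at htot
  rw [hsplit, sub_div, div_self hF, sub_sub, one_add_one_eq_two]
  refine le_of_mul_le_mul_left (htot.trans (le_of_eq ?_)) hpn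
  field_simp
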